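/- Let Ω ⊂ ℂ be a bounded domain containing 0 whose boundary is an analytic Jordan curve, and let φ be a negative continuous subharmonic exhaustion function for Ω that is harmonic on Ω ∖ K for some compact set K ⊂ Ω. Then for p > 0 a holomorphic function f on Ω belongs to the Poletsky–Stessin Hardy space H^p_φ(Ω) if and only if |f|^p has a harmonic majorant on Ω; that is, H^p_φ(Ω) = H^p(Ω). -/

import Mathlib

open MeasureTheory Filter Metric Complex Set
open scoped Real ENNReal Topology

noncomputable section

/-- The Laplacian of a real-valued function on `ℂ ≅ ℝ²`. -/
def lap (φ : ℂ → ℝ) (z : ℂ) : ℝ :=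
  fderiv ℝ (fun w => fderiv ℝ φ w 1) z 1 +
    fderiv ℝ (fun w => fderiv ℝ φ w Complex.I) z Complex.I

/-- `h` is harmonic on `s`. -/
def HarmonicOn (h : ℂ → ℝ) (s : Set ℂ) : Prop :=
  ContDiffOn ℝ 2 h s ∧ ∀ z ∈ s, lap h z = 0

/-- `u` is subharmonic on `s` (continuous with the sub-mean-value property). -/
def SubharmonicOn (u : ℂ → ℝ) (s : Set ℂ) : Prop :=
  ContinuousOn u s ∧ ∀ z ∈ s, ∀ r : ℝ, 0 < r → closedBall z r ⊆ s →
    u z ≤ (2 * Real.pi)⁻¹ *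
      ∫ t in (0:ℝ)..(2 * Real.pi), u (z + (r : ℂ) * Complex.exp ((t : ℂ) * Complex.I))

/-- `u` is a negative continuous subharmonic exhaustion function for `Ω`:
sublevel sets `{u < c}`, `c < 0`, are relatively compact in `Ω`. -/
structure IsExhaustion (u : ℂ → ℝ) (Ω : Set ℂ) : Prop where
  neg : ∀ z ∈ Ω, u z < 0
  subh : SubharmonicOn u Ω
  exh : ∀ c : ℝ, c < 0 → IsCompact (closure {z | z ∈ Ω ∧ u z < c}) ∧
    closure {z | z ∈ Ω ∧ u z < c} ⊆ Ω

/-- `ν` is the Riesz measure `dd^c u = (1/4) Δu dA` of `u` on `Ω`, characterized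
distributionally: `∫ φ dν = (1/4) ∫_Ω u Δφ dA` for test functions `φ`. -/
def IsRieszMeasure (u : ℂ → ℝ) (Ω : Set ℂ) (ν : Measure ℂ) : Prop :=
  ν Ωᶜ = 0 ∧
  ∀ φ : ℂ → ℝ, ContDiff ℝ 2 φ → HasCompactSupport φ → tsupport φ ⊆ Ω →
    ∫ z, φ z ∂ν = (4 : ℝ)⁻¹ * ∫ z in Ω, u z * lap φ z

/-- `μ` is the Monge–Ampère measure `μ_{u,r} = dd^c max(u,r) - χ_{Ω∖{u<r}} dd^c u`,
where `ν = dd^c u`. -/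
def IsMAMeasure (u : ℂ → ℝ) (Ω : Set ℂ) (ν : Measure ℂ) (r : ℝ) (μ : Measure ℂ) : Prop :=
  ∃ νr : Measure ℂ, IsRieszMeasure (fun z => max (u z) r) Ω νr ∧
    μ = νr - ν.restrict {z | z ∈ Ω ∧ r ≤ u z}

/-- The `p`-th power of the Poletsky–Stessin Hardy "norm",
`limsup_{r→0⁻} ∫ |f|^p dμ_{u,r}`. -/
def psNormPow (p : ℝ) (μfam : ℝ → Measure ℂ) (f : ℂ → ℂ) : ℝ≥0∞ :=
  Filter.limsup (fun r => ∫⁻ z, ENNReal.ofReal (‖f z‖ ^ p) ∂(μfam r))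
    (nhdsWithin 0 (Set.Iio 0))

/-- The Poletsky–Stessin Hardy norm. -/
def psNorm (p : ℝ) (μfam : ℝ → Measure ℂ) (f : ℂ → ℂ) : ℝ≥0∞ :=
  psNormPow p μfam f ^ (1 / p)

/-- Membership in the Poletsky–Stessin Hardy space `H^p_u(Ω)`, where `μfam r = μ_{u,r}`. -/
def MemPS (p : ℝ) (Ω : Set ℂ) (μfam : ℝ → Measure ℂ) (f : ℂ → ℂ) : Prop :=
  DifferentiableOn ℂ f Ω ∧ psNormPow p μfam f < ⊤

/-- Membership in the classical Hardy space `H^p(Ω)`: `|f|^p` has a harmonic majorant. -/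
def MemHClassical (p : ℝ) (Ω : Set ℂ) (f : ℂ → ℂ) : Prop :=
  DifferentiableOn ℂ f Ω ∧
    ∃ h : ℂ → ℝ, HarmonicOn h Ω ∧ ∀ z ∈ Ω, ‖f z‖ ^ p ≤ h z

/-- A bounded domain in `ℂ` containing `0` whose boundary is an analytic Jordan curve:
there is a conformal map of the unit disc onto `Ω` extending analytically and injectively
across the closed disc, carrying the unit circle onto the boundary of `Ω`. -/
structure AnalyticJordanDomain (Ω : Set ℂ) : Prop where
  isOpen : IsOpen Ω
  isConnected : IsConnected Ω
  isBounded : Bornology.IsBounded Ω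
  zero_mem : (0:ℂ) ∈ Ω
  analyticBoundary : ∃ (U : Set ℂ) (ψ : ℂ → ℂ), IsOpen U ∧ closedBall (0:ℂ) 1 ⊆ U ∧
    DifferentiableOn ℂ ψ U ∧ Set.InjOn ψ U ∧ ψ '' ball (0:ℂ) 1 = Ω ∧
    ψ '' sphere (0:ℂ) 1 = frontier Ω

/-- `μ` is the boundary Monge–Ampère measure: the weak* limit of the measures
`μfam r = μ_{u,r}` as `r → 0⁻`. -/
def IsBoundaryMA (μfam : ℝ → Measure ℂ) (μ : Measure ℂ) : Prop :=
  ∀ φ : ℂ → ℝ, Continuous φ →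
    Filter.Tendsto (fun r => ∫ z, φ z ∂(μfam r)) (nhdsWithin 0 (Set.Iio 0))
      (nhds (∫ z, φ z ∂μ))

/-- `f` has nontangential limit `L` at the boundary point `ξ` of `Ω`. -/
def NTLim (Ω : Set ℂ) (f : ℂ → ℂ) (ξ : ℂ) (L : ℂ) : Prop :=
  ∀ C : ℝ, 1 < C →
    Filter.Tendsto f
      (nhdsWithin ξ {z | z ∈ Ω ∧ dist z ξ ≤ C * infDist z (frontier Ω)}) (nhds L)

/-- Arc length measure on the boundary of `Ω` (1-dimensional Hausdorff measure). -/
def arcLen (Ω : Set ℂ) : Measure ℂ := (μH[1] : Measure ℂ).restrict (frontier Ω)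

/-!
The Monge–Ampère measures integrate `C²` functions by the Jensen–Lelong formula: if `φ ≤ r` on `K`,
then `∫ g dμ_{φ,r} = ∫ g dν + ¼ ∫ (max(φ, r) - φ) Δg`. The last term vanishes for a harmonic
majorant `g` of `|f|^p`, so the classical space is contained in the Poletsky–Stessin one.

Conversely, apply the formula to the smooth subharmonic function `g = (1 + |f|²)^{p/2}`, comparable
to `1 + |f|^p`. Letting `r → 0⁻` shows that `∫ |φ| Δg` is finite. This integral is conformally
invariant, so `Ω` may be replaced by the unit disc. There Hopf's lemma bounds `log (1/|w|)` by a
multiple of `|φ|` near the circle; hence `∫ log (1/|w|) Δg` converges and, by Green's formula in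
logarithmic coordinates, the means of `g` over circles stay bounded. On a smaller disc `g` is at
most the real part of an entire function, obtained by approximating the boundary values of `g` by
trigonometric polynomials, whose value at the centre is controlled by the mean of `g`. A normal
family argument, as the radii tend to one, yields a majorant on the whole disc.
-/

/-! ### The Laplacian -/

theorem lap_congr {u v : ℂ → ℝ} {z : ℂ} (h : u =ᶠ[𝓝 z] v) : lap u z = lap v z := by
  have hd (d : ℂ) : (fun w => fderiv ℝ u w d) =ᶠ[𝓝 z] fun w => fderiv ℝ v w d :=
    h.eventuallyEq_nhds.mono fun w hw => by simp only [hw.fderiv_eq]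
  simp only [lap, (hd _).fderiv_eq]

theorem lap_const (c : ℝ) (z : ℂ) : lap (fun _ => c) z = 0 := by
  simp [lap]

theorem differentiableAt_fderiv_of_contDiffAt {u : ℂ → ℝ} {z : ℂ} (hu : ContDiffAt ℝ 2 u z) :
    DifferentiableAt ℝ (fderiv ℝ u) z :=
  (hu.fderiv_right (m := 1) (by norm_num)).differentiableAt one_ne_zero

theorem fderiv_fderiv_apply {u : ℂ → ℝ} {z : ℂ} (hu : ContDiffAt ℝ 2 u z) (d e : ℂ) :
    fderiv ℝ (fun w => fderiv ℝ u w d) z e = fderiv ℝ (fderiv ℝ u) z e d := by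
  rw [((differentiableAt_fderiv_of_contDiffAt hu).hasFDerivAt.clm_apply
    (hasFDerivAt_const d z)).fderiv]
  simp

theorem lap_eq_fderiv_fderiv {u : ℂ → ℝ} {z : ℂ} (hu : ContDiffAt ℝ 2 u z) :
    lap u z = fderiv ℝ (fderiv ℝ u) z 1 1 + fderiv ℝ (fderiv ℝ u) z I I := by
  simp only [lap, fderiv_fderiv_apply hu]

theorem lap_eq_laplacian {u : ℂ → ℝ} {z : ℂ} (hu : ContDiffAt ℝ 2 u z) :
    lap u z = Laplacian.laplacian u z := by
  rw [lap_eq_fderiv_fderiv hu, InnerProductSpace.laplacian_eq_iteratedFDeriv_complexPlane]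
  simp [iteratedFDeriv_two_apply]

theorem lap_eq_zero_of_harmonicAt {u : ℂ → ℝ} {z : ℂ} (hu : InnerProductSpace.HarmonicAt u z) :
    lap u z = 0 := by
  rw [lap_eq_laplacian hu.1, hu.2.eq_of_nhds, Pi.zero_apply]

theorem lap_add {u v : ℂ → ℝ} {z : ℂ} (hu : ContDiffAt ℝ 2 u z) (hv : ContDiffAt ℝ 2 v z) :
    lap (fun w => u w + v w) z = lap u z + lap v z := by
  rw [lap_eq_laplacian hu, lap_eq_laplacian hv, lap_eq_laplacian (hu.add hv)]
  exact hu.laplacian_add hv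

theorem lap_const_mul {u : ℂ → ℝ} {z : ℂ} (c : ℝ) (hu : ContDiffAt ℝ 2 u z) :
    lap (fun w => c * u w) z = c * lap u z := by
  rw [lap_eq_laplacian hu, lap_eq_laplacian (contDiffAt_const.mul hu)]
  exact InnerProductSpace.laplacian_smul c hu

theorem continuousAt_lap {u : ℂ → ℝ} {z : ℂ} (hu : ContDiffAt ℝ 2 u z) :
    ContinuousAt (lap u) z := by
  have heq : lap u =ᶠ[𝓝 z] fun w => fderiv ℝ (fderiv ℝ u) w 1 1 + fderiv ℝ (fderiv ℝ u) w I I :=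
    (hu.eventually (by simp)).mono fun w hw => lap_eq_fderiv_fderiv hw
  have hD : ContinuousAt (fderiv ℝ (fderiv ℝ u)) z :=
    ((hu.fderiv_right (m := 1) (by norm_num)).fderiv_right (m := 0) (by norm_num)).continuousAt
  rw [continuousAt_congr heq]
  fun_prop

theorem continuousOn_lap {u : ℂ → ℝ} {V : Set ℂ} (hV : IsOpen V) (hu : ContDiffOn ℝ 2 u V) :
    ContinuousOn (lap u) V := fun _ hz =>
  (continuousAt_lap (hu.contDiffAt (hV.mem_nhds hz))).continuousWithinAt

theorem contDiffOn_comp_holomorphic {H : ℂ → ℝ} {f : ℂ → ℂ} {V W : Set ℂ} (hV : IsOpen V)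
    (hf : DifferentiableOn ℂ f V) (hfVW : MapsTo f V W) (hH : ContDiffOn ℝ 2 H W) :
    ContDiffOn ℝ 2 (fun z => H (f z)) V :=
  hH.comp ((hf.contDiffOn hV).restrict_scalars ℝ) hfVW

theorem hasFDerivAt_real_of_analyticAt {f : ℂ → ℂ} {z : ℂ} (hf : AnalyticAt ℂ f z) :
    HasFDerivAt f ((ContinuousLinearMap.toSpanSingleton ℂ (deriv f z)).restrictScalars ℝ) z :=
  hf.differentiableAt.hasDerivAt.hasFDerivAt.restrictScalars ℝ

theorem fderiv_fderiv_comp_holomorphic {H : ℂ → ℝ} {f : ℂ → ℂ} {z : ℂ} (hf : AnalyticAt ℂ f z)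
    (hH : ContDiffAt ℝ 2 H (f z)) (d : ℂ) :
    fderiv ℝ (fun w => fderiv ℝ (fun w => H (f w)) w d) z d =
      fderiv ℝ (fderiv ℝ H) (f z) (deriv f z * d) (deriv f z * d)
        + fderiv ℝ H (f z) (deriv (deriv f) z * (d * d)) := by
  have hfirst : (fun w => fderiv ℝ (fun w => H (f w)) w d) =ᶠ[𝓝 z]
      fun w => fderiv ℝ H (f w) (deriv f w * d) := by
    filter_upwards [hf.eventually_analyticAt,
      hf.continuousAt.eventually (hH.eventually (by simp))] with w hfw hHw
    have hcomp : fderiv ℝ (fun w => H (f w)) w = _ := ((hHw.differentiableAt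
      two_ne_zero).hasFDerivAt.comp w (hasFDerivAt_real_of_analyticAt hfw)).fderiv
    simp [hcomp, mul_comm]
  have hDH : HasFDerivAt (fun w => fderiv ℝ H (f w)) _ z :=
    (differentiableAt_fderiv_of_contDiffAt hH).hasFDerivAt.comp z
      (hasFDerivAt_real_of_analyticAt hf)
  rw [hfirst.fderiv_eq,
    (hDH.clm_apply ((hasFDerivAt_real_of_analyticAt hf.deriv).mul_const d)).fderiv]
  simp [mul_comm, mul_left_comm, add_comm]

theorem lap_comp_holomorphic {H : ℂ → ℝ} {f : ℂ → ℂ} {z : ℂ} (hf : AnalyticAt ℂ f z)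
    (hH : ContDiffAt ℝ 2 H (f z)) :
    lap (fun w => H (f w)) z = ‖deriv f z‖ ^ 2 * lap H (f z) := by
  rw [lap, fderiv_fderiv_comp_holomorphic hf hH, fderiv_fderiv_comp_holomorphic hf hH,
    lap_eq_fderiv_fderiv hH, Complex.sq_norm, normSq_apply]
  set a := deriv f z
  have ha1 : a * 1 = a.re • (1 : ℂ) + a.im • I := by simp [Complex.re_add_im]
  have haI : a * I = -a.im • (1 : ℂ) + a.re • I := by apply Complex.ext <;> simp
  rw [ha1, haI]
  simp only [map_add, map_smul, add_apply, smul_apply,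
    smul_eq_mul, mul_one, I_mul_I, mul_neg, map_neg, neg_smul, neg_apply]
  ring

theorem hasFDerivAt_normSq (w : ℂ) :
    HasFDerivAt (fun w : ℂ => normSq w) ((2 * w.re) • reCLM + (2 * w.im) • imCLM) w := by
  have hsum := (reCLM.hasFDerivAt (x := w)).mul reCLM.hasFDerivAt |>.add
    ((imCLM.hasFDerivAt (x := w)).mul imCLM.hasFDerivAt)
  refine (hsum.congr_fderiv ?_).congr_of_eventuallyEq (.of_forall normSq_apply)
  ext
  simp only [reCLM_apply, imCLM_apply, add_apply, smul_apply, smul_eq_mul]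
  ring

theorem contDiff_normSq {n : WithTop ℕ∞} : ContDiff ℝ n (fun w : ℂ => normSq w) := by
  simp only [normSq_apply]
  exact (reCLM.contDiff.mul reCLM.contDiff).add (imCLM.contDiff.mul imCLM.contDiff)

theorem fderiv_fderiv_comp_normSq {k k1 : ℝ → ℝ} {k2 : ℝ} {w : ℂ}
    (h1 : ∀ᶠ t in 𝓝 (normSq w), HasDerivAt k (k1 t) t) (h2 : HasDerivAt k1 k2 (normSq w)) (d : ℂ) :
    fderiv ℝ (fun w => fderiv ℝ (fun w => k (normSq w)) w d) w d =
      k2 * (2 * w.re * d.re + 2 * w.im * d.im) ^ 2 +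
        k1 (normSq w) * 2 * (d.re * d.re + d.im * d.im) := by
  have hfirst : (fun w => fderiv ℝ (fun w => k (normSq w)) w d) =ᶠ[𝓝 w]
      fun w => k1 (normSq w) * (2 * w.re * d.re + 2 * w.im * d.im) := by
    filter_upwards [(hasFDerivAt_normSq w).continuousAt.eventually h1] with v hv
    have hcomp : fderiv ℝ (fun w => k (normSq w)) v = _ :=
      (hv.comp_hasFDerivAt v (hasFDerivAt_normSq v)).fderiv
    rw [hcomp]
    simp only [smul_add, add_apply, smul_apply, reCLM_apply, smul_eq_mul, imCLM_apply]
    ring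
  have hlin : HasFDerivAt (fun w : ℂ => 2 * w.re * d.re + 2 * w.im * d.im)
      ((2 * d.re) • reCLM + (2 * d.im) • imCLM) w :=
    ((2 * d.re) • reCLM + (2 * d.im) • imCLM).hasFDerivAt.congr_of_eventuallyEq
      (.of_forall fun v => by
        simp only [add_apply, smul_apply, reCLM_apply, smul_eq_mul, imCLM_apply]
        ring)
  have hprod : fderiv ℝ (fun w => k1 (normSq w) * (2 * w.re * d.re + 2 * w.im * d.im)) w = _ :=
    ((h2.comp_hasFDerivAt w (hasFDerivAt_normSq w)).mul hlin).fderiv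
  rw [hfirst.fderiv_eq, hprod]
  simp only [Function.comp_apply, smul_add, add_apply, smul_apply, reCLM_apply, smul_eq_mul,
    imCLM_apply]
  ring

theorem lap_comp_normSq {k k1 : ℝ → ℝ} {k2 : ℝ} {w : ℂ}
    (h1 : ∀ᶠ t in 𝓝 (normSq w), HasDerivAt k (k1 t) t) (h2 : HasDerivAt k1 k2 (normSq w)) :
    lap (fun w => k (normSq w)) w = 4 * (k1 (normSq w) + normSq w * k2) := by
  rw [lap, fderiv_fderiv_comp_normSq h1 h2, fderiv_fderiv_comp_normSq h1 h2, normSq_apply]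
  simp only [one_re, mul_one, one_im, mul_zero, add_zero, I_re, I_im, zero_add]
  ring

theorem lap_normSq (z : ℂ) : lap (fun w => normSq w) z = 4 := by
  simpa using lap_comp_normSq (k := fun t => t) (w := z)
    (.of_forall hasDerivAt_id) (hasDerivAt_const _ 1)

theorem HarmonicOn.mono {u : ℂ → ℝ} {V W : Set ℂ} (hu : HarmonicOn u W) (hVW : V ⊆ W) :
    HarmonicOn u V :=
  ⟨hu.1.mono hVW, fun z hz => hu.2 z (hVW hz)⟩

theorem HarmonicOn.congr {u v : ℂ → ℝ} {V : Set ℂ} (hu : HarmonicOn u V) (hV : IsOpen V)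
    (h : EqOn v u V) : HarmonicOn v V :=
  ⟨hu.1.congr h, fun z hz => by
    rw [lap_congr (h.eventuallyEq_of_mem (hV.mem_nhds hz)), hu.2 z hz]⟩

theorem harmonicOn_of_harmonicAt {u : ℂ → ℝ} {V : Set ℂ}
    (hu : ∀ z ∈ V, InnerProductSpace.HarmonicAt u z) : HarmonicOn u V :=
  ⟨fun z hz => (hu z hz).1.contDiffWithinAt, fun z hz => lap_eq_zero_of_harmonicAt (hu z hz)⟩

theorem HarmonicOn.add_const_mul {u v : ℂ → ℝ} {V : Set ℂ} (hu : HarmonicOn u V) (hV : IsOpen V)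
    (hv : HarmonicOn v V) (c : ℝ) : HarmonicOn (fun w => u w + c * v w) V := by
  refine ⟨hu.1.add (contDiffOn_const.mul hv.1), fun w hw => ?_⟩
  have hvw := hv.1.contDiffAt (hV.mem_nhds hw)
  rw [lap_add (hu.1.contDiffAt (hV.mem_nhds hw)) (contDiffAt_const.mul hvw), lap_const_mul c hvw,
    hu.2 w hw, hv.2 w hw, mul_zero, add_zero]

theorem HarmonicOn.comp_holomorphic {u : ℂ → ℝ} {f : ℂ → ℂ} {V W : Set ℂ} (hu : HarmonicOn u W)
    (hV : IsOpen V) (hW : IsOpen W) (hf : DifferentiableOn ℂ f V) (hfVW : MapsTo f V W) :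
    HarmonicOn (fun z => u (f z)) V :=
  ⟨contDiffOn_comp_holomorphic hV hf hfVW hu.1, fun z hz => by
    rw [lap_comp_holomorphic (hf.analyticAt (hV.mem_nhds hz))
      (hu.1.contDiffAt (hW.mem_nhds (hfVW hz))), hu.2 _ (hfVW hz), mul_zero]⟩

/-! ### The maximum principle -/

theorem deriv_deriv_nonpos_of_isLocalMax {f : ℝ → ℝ} {a : ℝ} (hf : ContinuousAt f a)
    (hmax : IsLocalMax f a) : deriv (deriv f) a ≤ 0 := by
  by_contra! hpos
  -- A positive second derivative makes `a` a local minimum too, so `f` is locally constant.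
  have hmin := isLocalMin_of_deriv_deriv_pos hpos hmax.deriv_eq_zero hf
  have hconst : f =ᶠ[𝓝 a] fun _ => f a := by
    filter_upwards [hmin, hmax] with t h1 h2 using le_antisymm h2 h1
  have hderiv : deriv f =ᶠ[𝓝 a] fun _ => 0 :=
    hconst.eventuallyEq_nhds.mono fun t ht => by rw [ht.deriv_eq, deriv_const]
  simp [hderiv.deriv_eq] at hpos

theorem hasDerivAt_line (z d : ℂ) (t : ℝ) : HasDerivAt (fun t : ℝ => z + t * d) d t := by
  simpa using ((ofRealCLM.hasDerivAt (x := t)).mul_const d).const_add z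

theorem deriv_deriv_comp_line {u : ℂ → ℝ} {z : ℂ} (hu : ContDiffAt ℝ 2 u z) (d : ℂ) :
    deriv (deriv fun t : ℝ => u (z + t * d)) 0 = fderiv ℝ (fun w => fderiv ℝ u w d) z d := by
  have hline0 : z + (0 : ℝ) * d = z := by simp
  have htend : Tendsto (fun t : ℝ => z + t * d) (𝓝 0) (𝓝 z) := by
    simpa using (hasDerivAt_line z d 0).continuousAt.tendsto
  have hfirst : (deriv fun t : ℝ => u (z + t * d)) =ᶠ[𝓝 0] fun t => fderiv ℝ u (z + t * d) d :=
    (htend.eventually (hu.eventually (by simp))).mono fun t ht =>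
      ((ht.differentiableAt two_ne_zero).hasFDerivAt.comp_hasDerivAt t
        (hasDerivAt_line z d t)).deriv
  have hsecond : DifferentiableAt ℝ (fun w => fderiv ℝ u w d) (z + (0 : ℝ) * d) := by
    rw [hline0]
    exact (differentiableAt_fderiv_of_contDiffAt hu).clm_apply (differentiableAt_const d)
  rw [hfirst.deriv_eq]
  refine (hsecond.hasFDerivAt.comp_hasDerivAt 0 (hasDerivAt_line z d 0)).deriv.trans ?_
  rw [hline0]

theorem lap_nonpos_of_isLocalMax {u : ℂ → ℝ} {z : ℂ} (hu : ContDiffAt ℝ 2 u z)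
    (hmax : IsLocalMax u z) : lap u z ≤ 0 := by
  have hdir (d : ℂ) : fderiv ℝ (fun w => fderiv ℝ u w d) z d ≤ 0 := by
    have hline := (hasDerivAt_line z d 0).continuousAt
    rw [← deriv_deriv_comp_line hu]
    apply deriv_deriv_nonpos_of_isLocalMax
    · exact ContinuousAt.comp (f := fun t : ℝ => z + t * d) (by simpa using hu.continuousAt) hline
    · have htend : Tendsto (fun t : ℝ => z + t * d) (𝓝 0) (𝓝 z) := by simpa using hline.tendsto
      exact (htend.eventually hmax).mono fun t ht => by simpa using ht
  exact add_nonpos (hdir 1) (hdir I)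

theorem le_of_lap_pos {C V : Set ℂ} {u : ℂ → ℝ} {m : ℝ} (hC : IsCompact C) (hV : IsOpen V)
    (hVC : V ⊆ C) (hc : ContinuousOn u C) (hu : ∀ z ∈ V, ContDiffAt ℝ 2 u z)
    (hlap : ∀ z ∈ V, 0 < lap u z) (hb : ∀ z ∈ C, z ∉ V → u z ≤ m) : ∀ z ∈ C, u z ≤ m := by
  intro z hz
  obtain ⟨z0, hz0, hmax⟩ := hC.exists_isMaxOn ⟨z, hz⟩ hc
  refine (hmax hz).trans (hb z0 hz0 fun hz0V => ?_)
  exact (hlap z0 hz0V).not_ge (lap_nonpos_of_isLocalMax (hu z0 hz0V)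
    (hmax.isLocalMax (mem_of_superset (hV.mem_nhds hz0V) hVC)))

theorem le_of_lap_nonneg {C V : Set ℂ} {u : ℂ → ℝ} {m : ℝ} (hC : IsCompact C) (hV : IsOpen V)
    (hVC : V ⊆ C) (hc : ContinuousOn u C) (hu : ∀ z ∈ V, ContDiffAt ℝ 2 u z)
    (hlap : ∀ z ∈ V, 0 ≤ lap u z) (hb : ∀ z ∈ C, z ∉ V → u z ≤ m) : ∀ z ∈ C, u z ≤ m := by
  intro z hz
  obtain ⟨M, hM⟩ := hC.bddAbove_image continuous_normSq.continuousOn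
  have hM' (w : ℂ) (hw : w ∈ C) : normSq w ≤ M := hM (mem_image_of_mem _ hw)
  -- Perturb by `ε |z|²` to make the Laplacian positive, then let `ε → 0`.
  have hε (ε : ℝ) (hε : 0 < ε) : u z ≤ m + ε * M := by
    have hcd (w : ℂ) : ContDiffAt ℝ 2 (fun w => ε * normSq w) w :=
      contDiffAt_const.mul contDiff_normSq.contDiffAt
    refine le_trans (le_add_of_nonneg_right (mul_nonneg hε.le (normSq_nonneg z)))
      (le_of_lap_pos (u := fun w => u w + ε * normSq w) hC hV hVC
        (hc.add fun w _ => (hcd w).continuousAt.continuousWithinAt)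
        (fun w hw => (hu w hw).add (hcd w)) (fun w hw => ?_) (fun w hw hwV => ?_) z hz)
    · rw [lap_add (hu w hw) (hcd w), lap_const_mul ε contDiff_normSq.contDiffAt, lap_normSq]
      linarith [hlap w hw]
    · exact add_le_add (hb w hw hwV) (mul_le_mul_of_nonneg_left (hM' w hw) hε.le)
  have hlim : Tendsto (fun ε : ℝ => m + ε * M) (𝓝[>] 0) (𝓝 m) := by
    have hcont : Continuous fun ε : ℝ => m + ε * M := by fun_prop
    simpa using (hcont.tendsto 0).mono_left nhdsWithin_le_nhds
  exact ge_of_tendsto hlim (eventually_mem_nhdsWithin.mono hε)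

/-! ### Test functions -/

/-- `χ` is a test function on `Ω`: one of the functions against which `IsRieszMeasure` is tested,
of class `C²` with compact support contained in `Ω`. -/
structure IsTestFunction (Ω : Set ℂ) (χ : ℂ → ℝ) : Prop where
  contDiff : ContDiff ℝ 2 χ
  hasCompactSupport : HasCompactSupport χ
  tsupport_subset : tsupport χ ⊆ Ω

theorem continuous_mul_of_tsupport_subset {V : Set ℂ} {u w : ℂ → ℝ} (hV : IsOpen V)
    (hu : ContinuousOn u V) (hw : Continuous w) (ht : tsupport w ⊆ V) :
    Continuous fun z => u z * w z :=
  continuous_of_tsupport fun _ hz =>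
    (hu.continuousAt (hV.mem_nhds (ht (tsupport_mul_subset_right hz)))).mul hw.continuousAt

theorem integrable_mul_of_tsupport_subset {V : Set ℂ} {u w : ℂ → ℝ} (hV : IsOpen V)
    (hu : ContinuousOn u V) (hw : Continuous w) (hc : HasCompactSupport w) (ht : tsupport w ⊆ V)
    (μ : Measure ℂ) [IsFiniteMeasureOnCompacts μ] : Integrable (fun z => u z * w z) μ :=
  (continuous_mul_of_tsupport_subset hV hu hw ht).integrable_of_hasCompactSupport hc.mul_left

theorem lap_eq_zero_of_notMem_tsupport {χ : ℂ → ℝ} {z : ℂ} (hz : z ∉ tsupport χ) :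
    lap χ z = 0 := by
  rw [lap_congr (notMem_tsupport_iff_eventuallyEq.mp hz)]
  exact lap_const 0 z

theorem tsupport_lap_subset (χ : ℂ → ℝ) : tsupport (lap χ) ⊆ tsupport χ :=
  closure_minimal (fun _ hz => not_not.1 fun h => hz (lap_eq_zero_of_notMem_tsupport h))
    (isClosed_tsupport χ)

theorem contDiff_of_forall_mem_tsupport {w : ℂ → ℝ}
    (h : ∀ z ∈ tsupport w, ContDiffAt ℝ 2 w z) : ContDiff ℝ 2 w := by
  refine contDiff_iff_contDiffAt.2 fun z => ?_
  by_cases hz : z ∈ tsupport w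
  · exact h z hz
  · exact contDiffAt_const.congr_of_eventuallyEq (notMem_tsupport_iff_eventuallyEq.mp hz)

theorem integral_mul_fderiv_eq_neg {V : Set ℂ} {a b : ℂ → ℝ} (hV : IsOpen V)
    (ha : ContDiffOn ℝ 1 a V) (hb : ContDiff ℝ 1 b) (hc : HasCompactSupport b)
    (ht : tsupport b ⊆ V) (v : ℂ) :
    ∫ z, a z * fderiv ℝ b z v = -∫ z, fderiv ℝ a z v * b z := by
  have ha' (z : ℂ) (hz : z ∈ V) : ContDiffAt ℝ 1 a z := ha.contDiffAt (hV.mem_nhds hz)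
  have hDa : ContinuousOn (fun z => fderiv ℝ a z v) V :=
    (ha.continuousOn_fderiv_of_isOpen hV le_rfl).clm_apply continuousOn_const
  have hDb : Continuous fun z => fderiv ℝ b z v :=
    (hb.continuous_fderiv one_ne_zero).clm_apply continuous_const
  exact integral_mul_fderiv_eq_neg_fderiv_mul_of_integrable
    (integrable_mul_of_tsupport_subset hV hDa hb.continuous hc ht volume)
    (integrable_mul_of_tsupport_subset hV ha.continuousOn hDb (hc.fderiv_apply ℝ v)
      ((tsupport_fderiv_apply_subset ℝ v).trans ht) volume)
    (integrable_mul_of_tsupport_subset hV ha.continuousOn hb.continuous hc ht volume)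
    (fun z hz => (ha' z (ht hz)).differentiableAt one_ne_zero)
    (fun z _ => hb.differentiable one_ne_zero z)

theorem exists_cutoff {C Ω : Set ℂ} (hC : IsCompact C) (hΩ : IsOpen Ω) (h : C ⊆ Ω) :
    ∃ χ : ℂ → ℝ, IsTestFunction Ω χ ∧ (∀ z, χ z ∈ Icc 0 1) ∧ ∀ᶠ z in 𝓝ˢ C, χ z = 1 := by
  obtain ⟨L, hL, hCL, hLΩ⟩ := exists_compact_between hC hΩ h
  obtain ⟨χ, hone, hzero, hIcc⟩ := exists_contMDiffMap_one_nhds_of_subset_interior (n := 2)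
    (modelWithCornersSelf ℝ ℂ) hC.isClosed hCL
  have hsupp : tsupport χ ⊆ L :=
    closure_minimal (fun z hz => not_not.1 fun h => hz (hzero z h)) hL.isClosed
  exact ⟨χ, ⟨contMDiff_iff_contDiff.1 χ.contMDiff,
    hL.of_isClosed_subset (isClosed_tsupport _) hsupp, hsupp.trans hLΩ⟩, hIcc, hone⟩

namespace IsTestFunction

variable {Ω V : Set ℂ} {χ η u : ℂ → ℝ}

theorem mono (h : IsTestFunction Ω χ) (hV : Ω ⊆ V) : IsTestFunction V χ :=
  ⟨h.contDiff, h.hasCompactSupport, h.tsupport_subset.trans hV⟩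

theorem add (h : IsTestFunction Ω χ) (h' : IsTestFunction Ω η) :
    IsTestFunction Ω (fun z => χ z + η z) :=
  ⟨h.contDiff.add h'.contDiff, h.hasCompactSupport.add h'.hasCompactSupport,
    (tsupport_add χ η).trans (union_subset h.tsupport_subset h'.tsupport_subset)⟩

theorem mul (h : IsTestFunction Ω χ) (hΩ : IsOpen Ω) (hu : ContDiffOn ℝ 2 u Ω) :
    IsTestFunction Ω (fun z => u z * χ z) := by
  refine ⟨contDiff_of_forall_mem_tsupport fun z hz => ?_, h.hasCompactSupport.mul_left,
    tsupport_mul_subset_right.trans h.tsupport_subset⟩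
  exact (hu.contDiffAt (hΩ.mem_nhds (h.tsupport_subset (tsupport_mul_subset_right hz)))).mul
    h.contDiff.contDiffAt

theorem continuous_lap (h : IsTestFunction Ω χ) : Continuous (lap χ) :=
  continuous_iff_continuousAt.2 fun _ => continuousAt_lap h.contDiff.contDiffAt

theorem hasCompactSupport_lap (h : IsTestFunction Ω χ) : HasCompactSupport (lap χ) :=
  h.hasCompactSupport.of_isClosed_subset (isClosed_tsupport _) (tsupport_lap_subset χ)

theorem integrable_mul_lap (h : IsTestFunction Ω χ) (hΩ : IsOpen Ω) (hu : ContinuousOn u Ω) :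
    Integrable (fun z => u z * lap χ z) :=
  integrable_mul_of_tsupport_subset hΩ hu h.continuous_lap h.hasCompactSupport_lap
    ((tsupport_lap_subset χ).trans h.tsupport_subset) volume

theorem setIntegral_mul_lap (h : IsTestFunction Ω χ) :
    ∫ z in Ω, u z * lap χ z = ∫ z, u z * lap χ z :=
  setIntegral_eq_integral_of_forall_compl_eq_zero fun z hz => by
    rw [lap_eq_zero_of_notMem_tsupport fun hχ => hz (h.tsupport_subset hχ), mul_zero]

theorem integral_mul_fderiv_fderiv (h : IsTestFunction Ω χ) (hΩ : IsOpen Ω)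
    (hu : ContDiffOn ℝ 2 u Ω) (v : ℂ) :
    ∫ z, u z * fderiv ℝ (fun w => fderiv ℝ χ w v) z v =
      ∫ z, fderiv ℝ (fun w => fderiv ℝ u w v) z v * χ z := by
  have hDχ : ContDiff ℝ 1 fun z => fderiv ℝ χ z v :=
    (h.contDiff.fderiv_right (m := 1) (by norm_num)).clm_apply contDiff_const
  have hDu : ContDiffOn ℝ 1 (fun z => fderiv ℝ u z v) Ω :=
    (hu.fderiv_of_isOpen (m := 1) hΩ (by norm_num)).clm_apply contDiffOn_const
  rw [integral_mul_fderiv_eq_neg hΩ (hu.of_le one_le_two) hDχ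
      (h.hasCompactSupport.fderiv_apply ℝ v)
      ((tsupport_fderiv_apply_subset ℝ v).trans h.tsupport_subset),
    integral_mul_fderiv_eq_neg hΩ hDu (h.contDiff.of_le one_le_two) h.hasCompactSupport
      h.tsupport_subset, neg_neg]

theorem integral_mul_lap_eq (h : IsTestFunction Ω χ) (hΩ : IsOpen Ω) (hu : ContDiffOn ℝ 2 u Ω) :
    ∫ z, u z * lap χ z = ∫ z, χ z * lap u z := by
  have hDχ (v : ℂ) : ContDiff ℝ 1 fun z => fderiv ℝ χ z v :=
    (h.contDiff.fderiv_right (m := 1) (by norm_num)).clm_apply contDiff_const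
  have hDu (v : ℂ) : ContDiffOn ℝ 1 (fun z => fderiv ℝ u z v) Ω :=
    (hu.fderiv_of_isOpen (m := 1) hΩ (by norm_num)).clm_apply contDiffOn_const
  have hiχ (v : ℂ) : Integrable fun z => u z * fderiv ℝ (fun w => fderiv ℝ χ w v) z v :=
    integrable_mul_of_tsupport_subset hΩ hu.continuousOn
      (((hDχ v).continuous_fderiv one_ne_zero).clm_apply continuous_const)
      ((h.hasCompactSupport.fderiv_apply ℝ v).fderiv_apply ℝ v)
      (((tsupport_fderiv_apply_subset ℝ v).trans (tsupport_fderiv_apply_subset ℝ v)).trans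
        h.tsupport_subset) volume
  have hiu (v : ℂ) : Integrable fun z => fderiv ℝ (fun w => fderiv ℝ u w v) z v * χ z :=
    integrable_mul_of_tsupport_subset hΩ
      (((hDu v).continuousOn_fderiv_of_isOpen hΩ le_rfl).clm_apply continuousOn_const)
      h.contDiff.continuous h.hasCompactSupport h.tsupport_subset volume
  simp only [lap, mul_add, add_mul, mul_comm (χ _)]
  rw [integral_add (hiχ 1) (hiχ I), integral_add (hiu 1) (hiu I),
    h.integral_mul_fderiv_fderiv hΩ hu, h.integral_mul_fderiv_fderiv hΩ hu]

end IsTestFunction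

/-! ### Weakly harmonic functions and local finiteness of Riesz measures -/

section Mollification

variable {U ρ : ℂ → ℝ}

theorem fderiv_integral_mul_comp_sub (hU : LocallyIntegrable U) (hc : HasCompactSupport ρ)
    (hρ : ContDiff ℝ 1 ρ) (x d : ℂ) :
    fderiv ℝ (fun x => ∫ t, U t * ρ (x - t)) x d = ∫ t, U t * fderiv ℝ ρ (x - t) d := by
  have h := hc.hasFDerivAt_convolution_right (ContinuousLinearMap.lsmul ℝ ℝ) hU hρ x
  have happly := convolution_precompR_apply (ContinuousLinearMap.lsmul ℝ ℝ) hU (hc.fderiv ℝ)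
    (hρ.continuous_fderiv one_ne_zero) x d
  exact (congrArg (· d) h.fderiv).trans happly

theorem lap_integral_mul_comp_sub (hU : LocallyIntegrable U) (hc : HasCompactSupport ρ)
    (hρ : ContDiff ℝ 2 ρ) (x : ℂ) :
    lap (fun x => ∫ t, U t * ρ (x - t)) x = ∫ t, U t * lap ρ (x - t) := by
  have hDρ (d : ℂ) : ContDiff ℝ 1 fun z => fderiv ℝ ρ z d :=
    (hρ.fderiv_right (m := 1) (by norm_num)).clm_apply contDiff_const
  have hDc (d : ℂ) : HasCompactSupport fun z => fderiv ℝ ρ z d := hc.fderiv_apply ℝ d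
  have hint (d : ℂ) :
      Integrable fun t => U t * fderiv ℝ (fun w => fderiv ℝ ρ w d) (x - t) d :=
    ((hDc d).fderiv_apply ℝ d).convolutionExists_right (ContinuousLinearMap.lsmul ℝ ℝ) hU
      (((hDρ d).continuous_fderiv one_ne_zero).clm_apply continuous_const) x
  simp only [lap, mul_add]
  rw [integral_add (hint 1) (hint I)]
  simp only [fderiv_integral_mul_comp_sub hU hc (hρ.of_le one_le_two),
    fderiv_integral_mul_comp_sub hU (hDc _) (hDρ _)]

theorem lap_comp_const_sub (hρ : ContDiff ℝ 2 ρ) (x t : ℂ) :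
    lap (fun t => ρ (x - t)) t = lap ρ (x - t) := by
  have han : AnalyticAt ℂ (fun t => x - t) t := analyticAt_const.sub analyticAt_id
  simp [lap_comp_holomorphic han hρ.contDiffAt]

end Mollification

/-- Weak harmonicity: `u` annihilates the Laplacians of test functions on `Ω`. -/
def IsWeaklyHarmonic (u : ℂ → ℝ) (Ω : Set ℂ) : Prop :=
  ∀ χ, IsTestFunction Ω χ → ∫ z, u z * lap χ z = 0

theorem IsWeaklyHarmonic.integral_mul_lap_comp_sub {Ω : Set ℂ} {u χ ρ : ℂ → ℝ} {x : ℂ} {δ : ℝ}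
    (hu : IsWeaklyHarmonic u Ω) (hρ : ContDiff ℝ 2 ρ) (hsupp : tsupport ρ ⊆ closedBall 0 δ)
    (hball : ∀ t ∈ closedBall x δ, t ∈ Ω ∧ χ t = 1) :
    ∫ t, u t * χ t * lap ρ (x - t) = 0 := by
  have hη : tsupport (fun t => ρ (x - t)) ⊆ closedBall x δ := by
    refine closure_minimal (fun t ht => ?_) isClosed_closedBall
    simpa [dist_eq_norm, norm_sub_rev t x] using hsupp (subset_tsupport ρ ht)
  have htest : IsTestFunction Ω fun t => ρ (x - t) :=
    ⟨hρ.comp (contDiff_const.sub contDiff_id),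
      (isCompact_closedBall x δ).of_isClosed_subset (isClosed_tsupport _) hη,
      fun t ht => (hball t (hη ht)).1⟩
  rw [← hu _ htest]
  congr 1 with t
  rw [← lap_comp_const_sub hρ]
  by_cases ht : t ∈ tsupport fun t => ρ (x - t)
  · rw [(hball t (hη ht)).2, mul_one]
  · rw [lap_eq_zero_of_notMem_tsupport ht, mul_zero, mul_zero]

theorem IsWeaklyHarmonic.exists_contDiff_approx {Ω L : Set ℂ} {u : ℂ → ℝ} {ε : ℝ}
    (hu : IsWeaklyHarmonic u Ω) (hΩ : IsOpen Ω) (hc : ContinuousOn u Ω) (hL : IsCompact L)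
    (hLΩ : L ⊆ Ω) (hε : 0 < ε) :
    ∃ v : ℂ → ℝ, ContDiff ℝ 2 v ∧ (∀ z ∈ L, lap v z = 0) ∧ ∀ z ∈ L, |v z - u z| ≤ ε := by
  obtain ⟨χ, hχ, -, hχL⟩ := exists_cutoff hL hΩ hLΩ
  have hχc : Continuous fun z => u z * χ z :=
    continuous_mul_of_tsupport_subset hΩ hc hχ.contDiff.continuous hχ.tsupport_subset
  obtain ⟨W, hW, hLW, hWχ⟩ := mem_nhdsSet_iff_exists.1 (hχL.and (hΩ.mem_nhdsSet.2 hLΩ))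
  obtain ⟨δ₁, hδ₁, hthick⟩ := hL.exists_cthickening_subset_open hW hLW
  obtain ⟨δ₂, hδ₂, hunif⟩ := mem_uniformity_dist.1 <|
    hL.uniformContinuousAt_of_continuousAt _ (fun z _ => hχc.continuousAt) (dist_mem_uniformity hε)
  have hδ : 0 < min δ₁ δ₂ := lt_min hδ₁ hδ₂
  let bump : ContDiffBump (0 : ℂ) := ⟨min δ₁ δ₂ / 2, min δ₁ δ₂, half_pos hδ, half_lt_self hδ⟩
  set ρ : ℂ → ℝ := bump.normed volume
  refine ⟨fun x => ∫ t, u t * χ t * ρ (x - t), ?_, fun x hx => ?_, fun x hx => ?_⟩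
  · exact bump.hasCompactSupport_normed.contDiff_convolution_right
      (n := 2) (ContinuousLinearMap.lsmul ℝ ℝ) hχc.locallyIntegrable bump.contDiff_normed
  · rw [lap_integral_mul_comp_sub hχc.locallyIntegrable bump.hasCompactSupport_normed
      bump.contDiff_normed]
    refine hu.integral_mul_lap_comp_sub bump.contDiff_normed bump.tsupport_normed_eq.subset
      fun t ht => ?_
    have htW := hWχ (hthick (closedBall_subset_cthickening hx δ₁
      (closedBall_subset_closedBall (min_le_left δ₁ δ₂) ht)))
    exact ⟨htW.2, htW.1⟩
  · have hosc (y : ℂ) (hy : y ∈ ball x bump.rOut) : dist (u y * χ y) (u x * χ x) ≤ ε := by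
      rw [mem_ball'] at hy
      rw [dist_comm]
      exact (hunif (hy.trans_le (min_le_right δ₁ δ₂)) hx).le
    have hclose := bump.dist_normed_convolution_le (μ := volume) hχc.aestronglyMeasurable hosc
    rw [convolution_lsmul_swap, Real.dist_eq, hχL.self_of_nhdsSet x hx, mul_one] at hclose
    simpa only [smul_eq_mul, mul_comm] using hclose

/-- A negative continuous exhaustion function: an `IsExhaustion` without the submean inequality,
with relative compactness of sublevel sets restated as a lower bound off a compact set. -/
structure IsNegExhaustion (u : ℂ → ℝ) (Ω : Set ℂ) : Prop where
  continuousOn : ContinuousOn u Ω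
  neg : ∀ z ∈ Ω, u z < 0
  exists_isCompact : ∀ c < 0, ∃ C ⊆ Ω, IsCompact C ∧ ∀ z ∈ Ω, z ∉ C → c ≤ u z

theorem IsExhaustion.isNegExhaustion {u : ℂ → ℝ} {Ω : Set ℂ} (hu : IsExhaustion u Ω) :
    IsNegExhaustion u Ω where
  continuousOn := hu.subh.1
  neg := hu.neg
  exists_isCompact c hc :=
    ⟨_, (hu.exh c hc).2, (hu.exh c hc).1, fun _ hz hzC =>
      le_of_not_gt fun h => hzC (subset_closure ⟨hz, h⟩)⟩

namespace IsNegExhaustion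

variable {Ω C : Set ℂ} {u : ℂ → ℝ}

protected theorem max (hu : IsNegExhaustion u Ω) {r : ℝ} (hr : r < 0) :
    IsNegExhaustion (fun z => max (u z) r) Ω where
  continuousOn := hu.continuousOn.sup continuousOn_const
  neg z hz := max_lt (hu.neg z hz) hr
  exists_isCompact c hc := by
    obtain ⟨C, hCΩ, hC, hle⟩ := hu.exists_isCompact c hc
    exact ⟨C, hCΩ, hC, fun z hz hzC => (hle z hz hzC).trans (le_max_left _ _)⟩

theorem not_isWeaklyHarmonic (hu : IsNegExhaustion u Ω) (hΩ : IsOpen Ω) (hne : Ω.Nonempty) :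
    ¬ IsWeaklyHarmonic u Ω := by
  intro hweak
  obtain ⟨z₀, hz₀⟩ := hne
  have hd : u z₀ < 0 := hu.neg z₀ hz₀
  obtain ⟨C, hCΩ, hC, hle⟩ := hu.exists_isCompact (u z₀ / 3) (by linarith)
  obtain ⟨L, hL, hCL, hLΩ⟩ := exists_compact_between hC hΩ hCΩ
  have hz₀C : z₀ ∈ C := by
    by_contra h
    linarith [hle z₀ hz₀ h]
  -- A harmonic approximation `v` would violate the minimum principle between `z₀` and `∂L`.
  obtain ⟨v, hv, hlap, hvu⟩ := hweak.exists_contDiff_approx hΩ hu.continuousOn hL hLΩ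
    (show 0 < -u z₀ / 6 by linarith)
  have hmin := le_of_lap_nonneg (u := fun z => -1 * v z) (m := -u z₀ / 2) hL isOpen_interior
    interior_subset (contDiff_const.mul hv).continuous.continuousOn
    (fun z _ => (contDiff_const.mul hv).contDiffAt)
    (fun z hz => by rw [lap_const_mul _ hv.contDiffAt, hlap z (interior_subset hz), mul_zero])
    (fun z hz hzL => by
      have h1 := hle z (hLΩ hz) fun h => hzL (hCL h)
      linarith [(abs_le.1 (hvu z hz)).1])
    z₀ (interior_subset (hCL hz₀C))
  linarith [(abs_le.1 (hvu z₀ (interior_subset (hCL hz₀C)))).2]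

end IsNegExhaustion

namespace IsRieszMeasure

variable {Ω C V : Set ℂ} {u χ : ℂ → ℝ} {ν : Measure ℂ}

theorem integral_eq (hν : IsRieszMeasure u Ω ν) (hχ : IsTestFunction Ω χ) :
    ∫ z, χ z ∂ν = (4 : ℝ)⁻¹ * ∫ z, u z * lap χ z := by
  rw [hν.2 χ hχ.contDiff hχ.hasCompactSupport hχ.tsupport_subset, hχ.setIntegral_mul_lap]

theorem integral_mul_lap_eq_zero (hν : IsRieszMeasure u Ω ν) (hχ : IsTestFunction Ω χ)
    (hone : ∀ z ∈ C, 1 ≤ χ z) (htop : ν C = ⊤) : ∫ z, u z * lap χ z = 0 := by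
  have hnint : ¬ Integrable χ ν := fun hint =>
    (measure_mono (show C ⊆ {z | 1 ≤ χ z} from hone)).not_gt
      (htop ▸ hint.measure_ge_lt_top one_pos)
  simpa [integral_undef hnint] using hν.integral_eq hχ

theorem measure_lt_top (hν : IsRieszMeasure u Ω ν) (hΩ : IsOpen Ω) (hu : IsNegExhaustion u Ω)
    (hC : IsCompact C) (hCΩ : C ⊆ Ω) : ν C < ⊤ := by
  rcases C.eq_empty_or_nonempty with rfl | hne
  · simp
  by_contra! htop
  rw [top_le_iff] at htop
  obtain ⟨χ, hχ, -, hχC⟩ := exists_cutoff hC hΩ hCΩ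
  -- Pairing with test functions `≥ 1` on `C` gives the junk integral `0`; adding a large multiple
  -- of the cutoff then shows that `u` is weakly harmonic.
  refine hu.not_isWeaklyHarmonic hΩ (hne.mono hCΩ) fun η hη => ?_
  obtain ⟨M, hM⟩ := hη.hasCompactSupport.exists_bound_of_continuous hη.contDiff.continuous
  have hcχ : IsTestFunction Ω fun z => (M + 1) * χ z := hχ.mul hΩ contDiffOn_const
  have hχ0 : ∫ z, u z * lap χ z = 0 :=
    hν.integral_mul_lap_eq_zero hχ (fun z hz => (hχC.self_of_nhdsSet z hz).ge) htop
  have hsum := hν.integral_mul_lap_eq_zero (hη.add hcχ) (fun z hz => by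
    have h1 := (abs_le.1 (hM z)).1
    rw [hχC.self_of_nhdsSet z hz]
    linarith) htop
  have hsplit (z : ℂ) : u z * lap (fun z => η z + (M + 1) * χ z) z =
      u z * lap η z + (M + 1) * (u z * lap χ z) := by
    rw [lap_add hη.contDiff.contDiffAt hcχ.contDiff.contDiffAt,
      lap_const_mul _ hχ.contDiff.contDiffAt]
    ring
  simp only [hsplit] at hsum
  rwa [integral_add (hη.integrable_mul_lap hΩ hu.continuousOn)
    ((hχ.integrable_mul_lap hΩ hu.continuousOn).const_mul _), integral_const_mul, hχ0, mul_zero,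
    add_zero] at hsum

end IsRieszMeasure

/-! ### The Jensen–Lelong formula -/

namespace IsRieszMeasure

variable {Ω C V : Set ℂ} {u g χ : ℂ → ℝ} {ν : Measure ℂ}

theorem integrable_of_isTestFunction (hν : IsRieszMeasure u Ω ν) (hΩ : IsOpen Ω)
    (hu : IsNegExhaustion u Ω) (hχ : IsTestFunction Ω χ) : Integrable χ ν := by
  obtain ⟨M, hM⟩ := hχ.hasCompactSupport.exists_bound_of_continuous hχ.contDiff.continuous
  rw [← integrableOn_iff_integrable_of_support_subset (subset_tsupport χ)]
  exact Measure.integrableOn_of_bounded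
    (hν.measure_lt_top hΩ hu hχ.hasCompactSupport hχ.tsupport_subset).ne
    hχ.contDiff.continuous.aestronglyMeasurable (.of_forall hM)

theorem measure_eq_zero_of_harmonicOn (hν : IsRieszMeasure u Ω ν) (hΩ : IsOpen Ω)
    (hu : IsNegExhaustion u Ω) (hV : IsOpen V) (hVΩ : V ⊆ Ω) (hharm : HarmonicOn u V) :
    ν V = 0 := by
  refine measure_null_of_locally_null _ fun z hz => ?_
  obtain ⟨ε, hε, hball⟩ := nhds_basis_closedBall.mem_iff.1 (hV.mem_nhds hz)
  refine ⟨closedBall z ε, mem_nhdsWithin_of_mem_nhds (closedBall_mem_nhds z hε), ?_⟩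
  obtain ⟨χ, hχ, hχIcc, hχone⟩ := exists_cutoff (isCompact_closedBall z ε) hV hball
  have hpair : ∫ y, u y * lap χ y = 0 := by
    rw [hχ.integral_mul_lap_eq hV hharm.1]
    refine integral_eq_zero_of_ae (.of_forall fun y => ?_)
    by_cases hy : y ∈ V
    · simp [hharm.2 y hy]
    · simp [image_eq_zero_of_notMem_tsupport fun h => hy (hχ.tsupport_subset h)]
  have hzero : ∫ y, χ y ∂ν = 0 := by
    rw [hν.integral_eq (hχ.mono hVΩ), hpair, mul_zero]
  rw [integral_eq_zero_iff_of_nonneg (fun y => (hχIcc y).1)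
    (hν.integrable_of_isTestFunction hΩ hu (hχ.mono hVΩ))] at hzero
  refine measure_mono_null (fun y hy => ?_) hzero
  simp [hχone.self_of_nhdsSet y hy]

theorem measure_compl_eq_zero (hν : IsRieszMeasure u Ω ν) (hΩ : IsOpen Ω)
    (hu : IsNegExhaustion u Ω) (hV : IsOpen V) (hVΩ : V ⊆ Ω) (hharm : HarmonicOn u V)
    (hC : Ω \ C ⊆ V) : ν Cᶜ = 0 := by
  refine measure_mono_null (fun z hz => ?_)
    (measure_union_null (hν.measure_eq_zero_of_harmonicOn hΩ hu hV hVΩ hharm) hν.1)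
  by_cases hzΩ : z ∈ Ω
  · exact .inl (hC ⟨hzΩ, hz⟩)
  · exact .inr hzΩ

theorem integrable_and_integral_eq (hν : IsRieszMeasure u Ω ν) (hΩ : IsOpen Ω)
    (hu : IsNegExhaustion u Ω) (hC : ν Cᶜ = 0) (hχ : IsTestFunction Ω χ)
    (hone : ∀ z ∈ C, χ z = 1) (hg : ContDiffOn ℝ 2 g Ω) :
    Integrable g ν ∧ ∫ z, g z ∂ν = (4 : ℝ)⁻¹ * ∫ z, u z * lap (fun z => g z * χ z) z := by
  have hae : (fun z => g z * χ z) =ᵐ[ν] g := by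
    filter_upwards [mem_ae_iff.2 hC] with z hz
    rw [hone z hz, mul_one]
  exact ⟨(hν.integrable_of_isTestFunction hΩ hu (hχ.mul hΩ hg)).congr hae,
    (integral_congr_ae hae).symm.trans (hν.integral_eq (hχ.mul hΩ hg))⟩

end IsRieszMeasure

/-- The setting of the Jensen–Lelong formula: a negative exhaustion `φ` of the open set `Ω`,
harmonic off a compact set `K`, together with a level `m < 0` such that `φ ≤ m` on `K`. -/
structure IsHarmonicExhaustion (φ : ℂ → ℝ) (Ω K : Set ℂ) (m : ℝ) : Prop
    extends IsNegExhaustion φ Ω where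
  isOpen : IsOpen Ω
  isCompact : IsCompact K
  subset : K ⊆ Ω
  harmonicOn : HarmonicOn φ (Ω \ K)
  level_neg : m < 0
  le_level : ∀ z ∈ K, φ z ≤ m

theorem IsNegExhaustion.exists_isHarmonicExhaustion {φ : ℂ → ℝ} {Ω K : Set ℂ}
    (hφ : IsNegExhaustion φ Ω) (hΩ : IsOpen Ω) (hK : IsCompact K) (hKΩ : K ⊆ Ω)
    (hharm : HarmonicOn φ (Ω \ K)) : ∃ m, IsHarmonicExhaustion φ Ω K m := by
  rcases K.eq_empty_or_nonempty with rfl | hne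
  · exact ⟨-1, hφ, hΩ, hK, hKΩ, hharm, neg_one_lt_zero, fun _ hz => hz.elim⟩
  · obtain ⟨z₀, hz₀, hmax⟩ := hK.exists_isMaxOn hne (hφ.continuousOn.mono hKΩ)
    exact ⟨φ z₀, hφ, hΩ, hK, hKΩ, hharm, hφ.neg z₀ (hKΩ hz₀), fun z hz => hmax hz⟩

theorem integrable_of_tendsto_of_integral_le {α : Type*} [MeasurableSpace α] {μ : Measure α}
    {F : ℕ → α → ℝ} {f : α → ℝ} {c : ℝ} (hF : ∀ n, Integrable (F n) μ) (hF0 : ∀ n, 0 ≤ᵐ[μ] F n)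
    (hFc : ∀ n, ∫ x, F n x ∂μ ≤ c) (hlim : ∀ᵐ x ∂μ, Tendsto (fun n => F n x) atTop (𝓝 (f x))) :
    Integrable f μ := by
  refine ⟨aestronglyMeasurable_of_tendsto_ae _ (fun n => (hF n).1) hlim, ?_⟩
  calc ∫⁻ x, ‖f x‖ₑ ∂μ = ∫⁻ x, liminf (fun n => ‖F n x‖ₑ) atTop ∂μ :=
        lintegral_congr_ae (hlim.mono fun x hx => hx.enorm.liminf_eq.symm)
    _ ≤ liminf (fun n => ∫⁻ x, ‖F n x‖ₑ ∂μ) atTop :=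
        lintegral_liminf_le' fun n => (hF n).1.enorm
    _ ≤ ENNReal.ofReal c := by
        refine liminf_le_of_le (by isBoundedDefault) fun b hb => ?_
        obtain ⟨n, hn⟩ := hb.exists
        rw [← ofReal_integral_norm_eq_lintegral_enorm (hF n),
          integral_congr_ae ((hF0 n).mono fun x hx => Real.norm_of_nonneg hx)] at hn
        exact hn.trans (ENNReal.ofReal_le_ofReal (hFc n))
    _ < ⊤ := ENNReal.ofReal_lt_top

namespace IsHarmonicExhaustion

variable {Ω K : Set ℂ} {φ g h : ℂ → ℝ} {m p r : ℝ} {f : ℂ → ℂ} {ν μ : Measure ℂ}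
  {μfam : ℝ → Measure ℂ}

theorem isOpen_diff (hφ : IsHarmonicExhaustion φ Ω K m) : IsOpen (Ω \ K) :=
  hφ.isOpen.sdiff hφ.isCompact.isClosed

theorem measure_compl_eq_zero (hφ : IsHarmonicExhaustion φ Ω K m) (hν : IsRieszMeasure φ Ω ν) :
    ν Kᶜ = 0 :=
  hν.measure_compl_eq_zero hφ.isOpen hφ.toIsNegExhaustion hφ.isOpen_diff sdiff_subset
    hφ.harmonicOn subset_rfl

theorem measure_compl_sublevel_eq_zero (hφ : IsHarmonicExhaustion φ Ω K m) (hr : r ∈ Ioo m 0)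
    (hμ : IsRieszMeasure (fun z => max (φ z) r) Ω μ) : μ {z | z ∈ Ω ∧ φ z ≤ r}ᶜ = 0 := by
  have hV : IsOpen (Ω ∩ φ ⁻¹' Ioi r) :=
    hφ.continuousOn.isOpen_inter_preimage hφ.isOpen isOpen_Ioi
  have hVK : Ω ∩ φ ⁻¹' Ioi r ⊆ Ω \ K := fun z hz =>
    ⟨hz.1, fun hzK => (hr.1.trans hz.2).not_ge (hφ.le_level z hzK)⟩
  refine hμ.measure_compl_eq_zero hφ.isOpen (hφ.toIsNegExhaustion.max hr.2) hV inter_subset_left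
    ((hφ.harmonicOn.mono hVK).congr hV fun z hz => max_eq_left (le_of_lt hz.2)) fun z hz => ?_
  exact ⟨hz.1, not_le.1 fun hle => hz.2 ⟨hz.1, hle⟩⟩

theorem isRieszMeasure_of_isMAMeasure (hφ : IsHarmonicExhaustion φ Ω K m)
    (hν : IsRieszMeasure φ Ω ν) (hr : m < r) (hμ : IsMAMeasure φ Ω ν r μ) :
    IsRieszMeasure (fun z => max (φ z) r) Ω μ := by
  obtain ⟨νr, hνr, rfl⟩ := hμ
  have hnull : ν.restrict {z | z ∈ Ω ∧ r ≤ φ z} = 0 := by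
    rw [Measure.restrict_eq_zero]
    exact measure_mono_null
      (fun z hz hzK => (hr.trans_le hz.2).not_ge (hφ.le_level z hzK)) (hφ.measure_compl_eq_zero hν)
  rwa [hnull, Measure.sub_zero]

theorem jensen_lelong (hφ : IsHarmonicExhaustion φ Ω K m) (hν : IsRieszMeasure φ Ω ν)
    (hr : r ∈ Ioo m 0) (hμ : IsRieszMeasure (fun z => max (φ z) r) Ω μ)
    (hg : ContDiffOn ℝ 2 g Ω) :
    Integrable g μ ∧ IntegrableOn (fun z => (max (φ z) r - φ z) * lap g z) Ω ∧
      ∫ z, g z ∂μ = ∫ z, g z ∂ν + 4⁻¹ * ∫ z in Ω, (max (φ z) r - φ z) * lap g z := by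
  obtain ⟨C, hCΩ, hC, hle⟩ := hφ.exists_isCompact (r / 2) (by linarith [hr.2])
  have hsub : {z | z ∈ Ω ∧ φ z ≤ r} ⊆ C := fun z hz => by
    by_contra hzC
    linarith [hle z hz.1 hzC, hz.2, hr.2]
  obtain ⟨χ, hχ, -, hχone⟩ := exists_cutoff (hC.union hφ.isCompact) hφ.isOpen
    (union_subset hCΩ hφ.subset)
  have hmax := hφ.toIsNegExhaustion.max hr.2
  obtain ⟨hgμ, hμeq⟩ := hμ.integrable_and_integral_eq hφ.isOpen hmax
    (hφ.measure_compl_sublevel_eq_zero hr hμ) hχ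
    (fun z hz => hχone.self_of_nhdsSet z (.inl (hsub hz))) hg
  obtain ⟨-, hνeq⟩ := hν.integrable_and_integral_eq hφ.isOpen hφ.toIsNegExhaustion
    (hφ.measure_compl_eq_zero hν) hχ (fun z hz => hχone.self_of_nhdsSet z (.inr hz)) hg
  have htest := hχ.mul hφ.isOpen hg
  have hlocal : EqOn (fun z => (max (φ z) r - φ z) * lap (fun z => g z * χ z) z)
      (fun z => (max (φ z) r - φ z) * lap g z) Ω := fun z hz => by
    rcases le_or_gt (φ z) r with hzr | hzr
    · have heq : (fun z => g z * χ z) =ᶠ[𝓝 z] g := by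
        filter_upwards [hχone.filter_mono (nhds_le_nhdsSet (.inl (hsub ⟨hz, hzr⟩)))] with y hy
        rw [hy, mul_one]
      simp only [lap_congr heq]
    · simp only [max_eq_left hzr.le, sub_self, zero_mul]
  refine ⟨hgμ, ?_, ?_⟩
  · exact (htest.integrable_mul_lap hφ.isOpen
      (hmax.continuousOn.sub hφ.continuousOn)).integrableOn.congr_fun hlocal
        hφ.isOpen.measurableSet
  · rw [← setIntegral_congr_fun hφ.isOpen.measurableSet hlocal, htest.setIntegral_mul_lap, hμeq,
      hνeq]
    simp only [sub_mul]
    rw [integral_sub (htest.integrable_mul_lap hφ.isOpen hmax.continuousOn)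
      (htest.integrable_mul_lap hφ.isOpen hφ.continuousOn)]
    ring

theorem measure_univ_eq (hφ : IsHarmonicExhaustion φ Ω K m) (hν : IsRieszMeasure φ Ω ν)
    (hr : r ∈ Ioo m 0) (hμ : IsRieszMeasure (fun z => max (φ z) r) Ω μ) :
    μ univ = ENNReal.ofReal (∫ _, 1 ∂ν) := by
  obtain ⟨hint, -, heq⟩ := hφ.jensen_lelong (g := fun _ => 1) hν hr hμ contDiffOn_const
  simp only [lap_const, mul_zero, integral_zero, add_zero] at heq
  rw [← heq, ofReal_integral_eq_lintegral_ofReal hint (.of_forall fun _ => zero_le_one)]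
  simp

theorem psNormPow_lt_top_of_harmonicOn (hφ : IsHarmonicExhaustion φ Ω K m)
    (hν : IsRieszMeasure φ Ω ν) (hμ : ∀ r < 0, IsMAMeasure φ Ω ν r (μfam r))
    (hh : HarmonicOn h Ω) (hfh : ∀ z ∈ Ω, ‖f z‖ ^ p ≤ h z) : psNormPow p μfam f < ⊤ := by
  have hbound : ∀ᶠ r in 𝓝[<] (0 : ℝ),
      ∫⁻ z, ENNReal.ofReal (‖f z‖ ^ p) ∂μfam r ≤ ENNReal.ofReal (∫ z, h z ∂ν) := by
    filter_upwards [Ioo_mem_nhdsLT hφ.level_neg] with r hr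
    have hriesz := hφ.isRieszMeasure_of_isMAMeasure hν hr.1 (hμ r hr.2)
    obtain ⟨hint, -, heq⟩ := hφ.jensen_lelong hν hr hriesz hh.1
    have hΩae : ∀ᵐ z ∂μfam r, z ∈ Ω := mem_ae_iff.2 hriesz.1
    have hlap : ∫ z in Ω, (max (φ z) r - φ z) * lap h z = 0 :=
      setIntegral_eq_zero_of_forall_eq_zero fun z hz => by rw [hh.2 z hz, mul_zero]
    rw [hlap, mul_zero, add_zero] at heq
    rw [← heq, ofReal_integral_eq_lintegral_ofReal hint
      (hΩae.mono fun z hz => (Real.rpow_nonneg (norm_nonneg _) _).trans (hfh z hz))]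
    exact lintegral_mono_ae (hΩae.mono fun z hz => ENNReal.ofReal_le_ofReal (hfh z hz))
  exact (limsup_le_of_le (by isBoundedDefault) hbound).trans_lt ENNReal.ofReal_lt_top

theorem integrableOn_mul_lap (hφ : IsHarmonicExhaustion φ Ω K m) (hν : IsRieszMeasure φ Ω ν)
    (hμ : ∀ r < 0, IsMAMeasure φ Ω ν r (μfam r)) (hg : ContDiffOn ℝ 2 g Ω)
    (hlap : ∀ z ∈ Ω, 0 ≤ lap g z) {M : ℝ} (hM : ∀ᶠ r in 𝓝[<] (0 : ℝ), ∫ z, g z ∂μfam r ≤ M) :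
    IntegrableOn (fun z => φ z * lap g z) Ω := by
  have hev : ∀ᶠ r in 𝓝[<] (0 : ℝ),
      IntegrableOn (fun z => (max (φ z) r - φ z) * lap g z) Ω ∧
        ∫ z in Ω, (max (φ z) r - φ z) * lap g z ≤ 4 * (M - ∫ z, g z ∂ν) := by
    filter_upwards [hM, Ioo_mem_nhdsLT hφ.level_neg] with r hrM hr
    obtain ⟨-, hint, heq⟩ := hφ.jensen_lelong hν hr
      (hφ.isRieszMeasure_of_isMAMeasure hν hr.1 (hμ r hr.2)) hg
    exact ⟨hint, by linarith⟩
  obtain ⟨r, hr, hevr⟩ := exists_seq_forall_of_frequently hev.frequently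
  have hr0 : Tendsto r atTop (𝓝 0) := hr.mono_right nhdsWithin_le_nhds
  have hlim : ∀ᵐ z ∂volume.restrict Ω, Tendsto (fun n => (max (φ z) (r n) - φ z) * lap g z)
      atTop (𝓝 (-(φ z * lap g z))) := by
    filter_upwards [ae_restrict_mem hφ.isOpen.measurableSet] with z hz
    have hmax := (tendsto_const_nhds (x := φ z)).max hr0
    rw [max_eq_right (hφ.neg z hz).le] at hmax
    simpa using (hmax.sub_const (φ z)).mul_const (lap g z)
  refine integrable_neg_iff.1 (integrable_of_tendsto_of_integral_le
    (fun n => (hevr n).1) (fun n => ?_) (fun n => (hevr n).2) hlim)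
  filter_upwards [ae_restrict_mem hφ.isOpen.measurableSet] with z hz
  exact mul_nonneg (sub_nonneg.2 (le_max_left _ _)) (hlap z hz)

theorem eventually_integral_le (hφ : IsHarmonicExhaustion φ Ω K m) (hν : IsRieszMeasure φ Ω ν)
    (hμ : ∀ r < 0, IsMAMeasure φ Ω ν r (μfam r)) {c : ℝ}
    (hgf : ∀ z ∈ Ω, |g z| ≤ c * (1 + ‖f z‖ ^ p)) (hfin : psNormPow p μfam f < ⊤) :
    ∃ M, ∀ᶠ r in 𝓝[<] (0 : ℝ), ∫ z, g z ∂μfam r ≤ M := by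
  obtain ⟨A, hA, hAtop⟩ := exists_between hfin
  set B := ENNReal.ofReal c * (ENNReal.ofReal (∫ _, 1 ∂ν) + A) with hB
  have hBtop : B ≠ ⊤ := ENNReal.mul_ne_top ENNReal.ofReal_ne_top
    (ENNReal.add_ne_top.2 ⟨ENNReal.ofReal_ne_top, hAtop.ne⟩)
  refine ⟨B.toReal, ?_⟩
  filter_upwards [eventually_lt_of_limsup_lt hA (by isBoundedDefault),
    Ioo_mem_nhdsLT hφ.level_neg] with r hrA hr
  have hriesz := hφ.isRieszMeasure_of_isMAMeasure hν hr.1 (hμ r hr.2)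
  have hpt : ∀ᵐ z ∂μfam r,
      ‖g z‖ₑ ≤ ENNReal.ofReal c * (1 + ENNReal.ofReal (‖f z‖ ^ p)) := by
    filter_upwards [mem_ae_iff.2 hriesz.1] with z hz
    have hpos : 0 ≤ ‖f z‖ ^ p := Real.rpow_nonneg (norm_nonneg _) _
    rw [Real.enorm_eq_ofReal_abs, ← ENNReal.ofReal_one, ← ENNReal.ofReal_add zero_le_one hpos,
      ← ENNReal.ofReal_mul' (by positivity)]
    exact ENNReal.ofReal_le_ofReal (hgf z hz)
  have hle : ∫⁻ z, ‖g z‖ₑ ∂μfam r ≤ B := calc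
    _ ≤ ∫⁻ z, ENNReal.ofReal c * (1 + ENNReal.ofReal (‖f z‖ ^ p)) ∂μfam r :=
        lintegral_mono_ae hpt
    _ = ENNReal.ofReal c * (μfam r univ + ∫⁻ z, ENNReal.ofReal (‖f z‖ ^ p) ∂μfam r) := by
        rw [lintegral_const_mul' _ _ ENNReal.ofReal_ne_top, lintegral_add_left measurable_const,
          lintegral_one]
    _ ≤ B := by
        rw [hφ.measure_univ_eq hν hr hriesz, hB]
        gcongr
  calc ∫ z, g z ∂μfam r ≤ ‖∫ z, g z ∂μfam r‖ := Real.le_norm_self _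
    _ = ‖∫ z, g z ∂μfam r‖ₑ.toReal := (toReal_enorm _).symm
    _ ≤ B.toReal := ENNReal.toReal_mono hBtop ((enorm_integral_le_lintegral_enorm _).trans hle)

end IsHarmonicExhaustion

/-! ### A smooth subharmonic substitute for `|f| ^ p` -/

theorem contDiffAt_one_add_normSq_rpow (q : ℝ) (w : ℂ) :
    ContDiffAt ℝ 2 (fun w : ℂ => (1 + normSq w) ^ q) w :=
  (contDiffAt_const.add contDiff_normSq.contDiffAt).rpow_const_of_ne
    (by linarith [normSq_nonneg w])

theorem lap_one_add_normSq_rpow_nonneg {q : ℝ} (hq : 0 ≤ q) (w : ℂ) :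
    0 ≤ lap (fun w : ℂ => (1 + normSq w) ^ q) w := by
  have hderiv (s : ℝ) {t : ℝ} (ht : -1 < t) :
      HasDerivAt (fun t : ℝ => (1 + t) ^ s) (s * (1 + t) ^ (s - 1)) t := by
    simpa using ((hasDerivAt_id t).const_add 1).rpow_const (p := s) (.inl (by rw [id]; linarith))
  have hw : -1 < normSq w := neg_one_lt_zero.trans_le (normSq_nonneg w)
  have hpos : 0 < 1 + normSq w := by linarith
  have hlap := lap_comp_normSq ((eventually_gt_nhds hw).mono fun t ht => hderiv q ht)
    ((hderiv (q - 1) hw).const_mul q)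
  have hrpow : (1 + normSq w) ^ (q - 1) = (1 + normSq w) ^ (q - 1 - 1) * (1 + normSq w) := by
    rw [← Real.rpow_add_one hpos.ne', sub_add_cancel]
  calc 0 ≤ 4 * (q * (1 + normSq w) ^ (q - 1 - 1) * (1 + q * normSq w)) := by
        have := normSq_nonneg w
        positivity
    _ = lap (fun w : ℂ => (1 + normSq w) ^ q) w := by
        rw [hlap, hrpow]
        ring

/-- A `C²` subharmonic function comparable to `|f| ^ p`, which itself need not be smooth at the
zeros of `f`. -/
def smoothNormRpow (p : ℝ) (f : ℂ → ℂ) (z : ℂ) : ℝ := (1 + normSq (f z)) ^ (p / 2)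

section smoothNormRpow

variable {p : ℝ} {f : ℂ → ℂ} {z : ℂ}

theorem smoothNormRpow_nonneg (p : ℝ) (f : ℂ → ℂ) (z : ℂ) : 0 ≤ smoothNormRpow p f z :=
  Real.rpow_nonneg (add_nonneg zero_le_one (normSq_nonneg _)) _

theorem contDiffAt_smoothNormRpow (p : ℝ) (hf : AnalyticAt ℂ f z) :
    ContDiffAt ℝ 2 (smoothNormRpow p f) z :=
  ContDiffAt.comp z (contDiffAt_one_add_normSq_rpow (p / 2) (f z))
    ((hf.contDiffAt (n := 2)).restrict_scalars ℝ)

theorem lap_smoothNormRpow_nonneg (hp : 0 ≤ p) (hf : AnalyticAt ℂ f z) :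
    0 ≤ lap (smoothNormRpow p f) z := by
  have hlap : lap (smoothNormRpow p f) z = _ :=
    lap_comp_holomorphic (H := fun w => (1 + normSq w) ^ (p / 2)) hf
      (contDiffAt_one_add_normSq_rpow (p / 2) (f z))
  rw [hlap]
  exact mul_nonneg (sq_nonneg _) (lap_one_add_normSq_rpow_nonneg (by positivity) _)

theorem norm_rpow_eq_normSq_rpow (p : ℝ) (w : ℂ) : ‖w‖ ^ p = normSq w ^ (p / 2) := by
  rw [normSq_eq_norm_sq, ← Real.rpow_natCast, ← Real.rpow_mul (norm_nonneg _)]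
  congr 1
  push_cast
  ring

theorem norm_rpow_le_smoothNormRpow (hp : 0 ≤ p) (f : ℂ → ℂ) (z : ℂ) :
    ‖f z‖ ^ p ≤ smoothNormRpow p f z := by
  rw [norm_rpow_eq_normSq_rpow]
  exact Real.rpow_le_rpow (normSq_nonneg _) (by linarith) (by positivity)

theorem smoothNormRpow_le (hp : 0 ≤ p) (f : ℂ → ℂ) (z : ℂ) :
    smoothNormRpow p f z ≤ 2 ^ (p / 2) * (1 + ‖f z‖ ^ p) := by
  rw [norm_rpow_eq_normSq_rpow, smoothNormRpow]
  have hx := normSq_nonneg (f z)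
  set x := normSq (f z)
  have hmax : 1 + x ≤ 2 * max 1 x := by linarith [le_max_left 1 x, le_max_right 1 x]
  calc (1 + x) ^ (p / 2) ≤ (2 * max 1 x) ^ (p / 2) :=
        Real.rpow_le_rpow (by positivity) hmax (by positivity)
    _ = 2 ^ (p / 2) * max 1 x ^ (p / 2) := Real.mul_rpow zero_le_two (by positivity)
    _ ≤ 2 ^ (p / 2) * (1 + x ^ (p / 2)) := by
        gcongr
        rcases max_choice 1 x with h | h <;> rw [h]
        · simpa using Real.rpow_nonneg hx _
        · linarith

end smoothNormRpow

/-! ### Injective holomorphic maps -/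

section InjOn

variable {f : ℂ → ℂ} {V W : Set ℂ} {w : ℂ}

theorem not_eventually_eq_const_of_injOn (hV : IsOpen V) (hinj : InjOn f V) (hw : w ∈ V) :
    ¬∀ᶠ y in 𝓝 w, f y = f w := fun hconst => by
  have heq : ∀ᶠ y in 𝓝[≠] w, y = w := by
    filter_upwards [nhdsWithin_le_nhds hconst, nhdsWithin_le_nhds (hV.mem_nhds hw)] with y hy hyV
    exact hinj hyV hw hy
  obtain ⟨y, hy, hne⟩ := (heq.and self_mem_nhdsWithin).exists
  exact hne hy

theorem image_mem_nhds_of_injOn (hV : IsOpen V) (hf : DifferentiableOn ℂ f V) (hinj : InjOn f V)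
    {S : Set ℂ} (hw : w ∈ V) (hS : S ∈ 𝓝 w) : f '' S ∈ 𝓝 (f w) :=
  (hf.analyticAt (hV.mem_nhds hw)).eventually_constant_or_nhds_le_map_nhds.resolve_left
    (not_eventually_eq_const_of_injOn hV hinj hw) (image_mem_map hS)

theorem eventually_deriv_ne_zero_of_injOn (hV : IsOpen V) (hf : DifferentiableOn ℂ f V)
    (hinj : InjOn f V) (hw : w ∈ V) : ∀ᶠ y in 𝓝[≠] w, deriv f y ≠ 0 := by
  have han : AnalyticAt ℂ f w := hf.analyticAt (hV.mem_nhds hw)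
  refine han.deriv.eventually_eq_zero_or_eventually_ne_zero.resolve_left fun hzero => ?_
  obtain ⟨ε, hε, hball⟩ := Metric.mem_nhds_iff.1 (inter_mem hzero (hV.mem_nhds hw))
  refine not_eventually_eq_const_of_injOn hV hinj hw ?_
  filter_upwards [ball_mem_nhds _ hε] with y hy
  exact isOpen_ball.is_const_of_deriv_eq_zero (convex_ball _ _).isPreconnected
    (hf.mono fun x hx => (hball hx).2) (fun x hx => (hball hx).1) hy (mem_ball_self hε)

theorem isOpen_image_of_injOn (hV : IsOpen V) (hf : DifferentiableOn ℂ f V) (hinj : InjOn f V) :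
    IsOpen (f '' V) := by
  refine isOpen_iff_mem_nhds.2 ?_
  rintro _ ⟨w, hw, rfl⟩
  exact image_mem_nhds_of_injOn hV hf hinj hw (hV.mem_nhds hw)

theorem continuousAt_invFunOn (hV : IsOpen V) (hf : DifferentiableOn ℂ f V) (hinj : InjOn f V)
    (hw : w ∈ V) : ContinuousAt (Function.invFunOn f V) (f w) := by
  intro S hS
  rw [hinj.leftInvOn_invFunOn hw] at hS
  rw [mem_map]
  filter_upwards [image_mem_nhds_of_injOn hV hf hinj hw (inter_mem hS (hV.mem_nhds hw))]
  rintro _ ⟨x, hx, rfl⟩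
  rw [mem_preimage, hinj.leftInvOn_invFunOn hx.2]
  exact hx.1

theorem differentiableAt_invFunOn (hV : IsOpen V) (hf : DifferentiableOn ℂ f V)
    (hinj : InjOn f V) (hw : w ∈ V) (hderiv : deriv f w ≠ 0) :
    DifferentiableAt ℂ (Function.invFunOn f V) (f w) := by
  have hleft := hinj.leftInvOn_invFunOn hw
  refine (HasDerivAt.of_local_left_inverse (f := f) (f' := deriv f w)
    (continuousAt_invFunOn hV hf hinj hw) ?_ hderiv ?_).differentiableAt
  · rw [hleft]
    exact (hf.differentiableAt (hV.mem_nhds hw)).hasDerivAt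
  · filter_upwards [(isOpen_image_of_injOn hV hf hinj).mem_nhds (mem_image_of_mem f hw)] with z hz
    exact Function.invFunOn_eq hz

theorem differentiableOn_invFunOn (hV : IsOpen V) (hf : DifferentiableOn ℂ f V)
    (hinj : InjOn f V) : DifferentiableOn ℂ (Function.invFunOn f V) (f '' V) := by
  rintro _ ⟨w, hw, rfl⟩
  have hcont := continuousAt_invFunOn hV hf hinj hw
  have hright : ∀ᶠ z in 𝓝[≠] f w, z ∈ f '' V := nhdsWithin_le_nhds
    ((isOpen_image_of_injOn hV hf hinj).mem_nhds (mem_image_of_mem f hw))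
  have htend : Tendsto (Function.invFunOn f V) (𝓝[≠] f w) (𝓝[≠] w) := by
    refine tendsto_nhdsWithin_of_tendsto_nhds_of_eventually_within _ ?_ ?_
    · simpa only [hinj.leftInvOn_invFunOn hw] using hcont.tendsto.mono_left nhdsWithin_le_nhds
    · filter_upwards [hright, self_mem_nhdsWithin] with z hz hne heq
      exact hne (by rw [← Function.invFunOn_eq hz, heq, mem_singleton_iff])
  refine (analyticAt_of_differentiable_on_punctured_nhds_of_continuousAt ?_
    hcont).differentiableAt.differentiableWithinAt
  filter_upwards [htend.eventually (eventually_deriv_ne_zero_of_injOn hV hf hinj hw), hright]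
    with z hz hzV
  have hinv := Function.invFunOn_mem hzV
  simpa only [Function.invFunOn_eq hzV] using differentiableAt_invFunOn hV hf hinj hinv hz

theorem integrableOn_mul_lap_comp {u g : ℂ → ℝ} (hV : IsOpen V) (hf : DifferentiableOn ℂ f V)
    (hinj : InjOn f V) (hW : IsOpen W) (hfW : MapsTo f V W) (hg : ContDiffOn ℝ 2 g W)
    (hint : IntegrableOn (fun z => u z * lap g z) W) :
    IntegrableOn (fun w => u (f w) * lap (fun w => g (f w)) w) V := by
  have han (w : ℂ) (hw : w ∈ V) : AnalyticAt ℂ f w := hf.analyticAt (hV.mem_nhds hw)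
  have himage := (integrableOn_image_iff_integrableOn_abs_det_fderiv_smul volume hV.measurableSet
    (fun w hw => (hasFDerivAt_real_of_analyticAt (han w hw)).hasFDerivWithinAt) hinj _).1
    (hint.mono_set hfW.image_subset)
  refine himage.congr_fun (fun w hw => ?_) hV.measurableSet
  have hdet : ((ContinuousLinearMap.toSpanSingleton ℂ (deriv f w)).restrictScalars ℝ).det =
      ‖deriv f w‖ ^ 2 := by
    simp [ContinuousLinearMap.det, LinearMap.det_restrictScalars, Algebra.norm_complex_eq,
      normSq_eq_norm_sq]
  simp only [hdet, lap_comp_holomorphic (han w hw) (hg.contDiffAt (hW.mem_nhds (hfW hw))),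
    abs_of_nonneg (sq_nonneg ‖deriv f w‖), smul_eq_mul]
  ring

end InjOn

/-! ### Hopf's lemma on the disc -/

theorem harmonicOn_log_norm : HarmonicOn (fun w => Real.log ‖w‖) {0}ᶜ :=
  harmonicOn_of_harmonicAt fun _ hw => analyticAt_id.harmonicAt_log_norm hw

theorem le_mul_log_norm_sub {u : ℂ → ℝ} {a b c : ℝ} (ha : 0 < a) (hb : b ∈ Ioo a 1)
    (hu : ContinuousOn u (ball 0 1)) (hneg : ∀ w ∈ ball 0 1, u w < 0)
    (hharm : HarmonicOn u (ball 0 1 \ closedBall 0 a)) (hc : 0 ≤ c)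
    (hsphere : ∀ w ∈ sphere 0 a, u w ≤ c * Real.log a) :
    ∀ w ∈ closedBall (0 : ℂ) b \ ball 0 a, u w ≤ c * Real.log ‖w‖ - c * Real.log b := by
  have hlogb : Real.log b < 0 := Real.log_neg (ha.trans hb.1) hb.2
  have hsub : closedBall (0 : ℂ) b ⊆ ball 0 1 := closedBall_subset_ball hb.2
  have hV : IsOpen (ball (0 : ℂ) b \ closedBall 0 a) := isOpen_ball.sdiff isClosed_closedBall
  have hne (w : ℂ) (hw : a ≤ ‖w‖) : w ∈ ({0}ᶜ : Set ℂ) := norm_pos_iff.1 (ha.trans_le hw)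
  have hv : HarmonicOn (fun w => u w + -c * Real.log ‖w‖) (ball 0 b \ closedBall 0 a) :=
    (hharm.mono (sdiff_subset_sdiff_left (ball_subset_ball hb.2.le))).add_const_mul hV
      (harmonicOn_log_norm.mono fun w hw => hne w (le_of_lt (by simpa using hw.2))) (-c)
  have hmax := le_of_lap_nonneg (u := fun w => u w + -c * Real.log ‖w‖) (m := -(c * Real.log b))
    ((isCompact_closedBall (0 : ℂ) b).diff isOpen_ball) hV
    (sdiff_subset_sdiff ball_subset_closedBall ball_subset_closedBall)
    ((hu.mono (sdiff_subset.trans hsub)).add (continuousOn_const.mul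
      (harmonicOn_log_norm.1.continuousOn.mono fun w hw => hne w (by simpa using hw.2))))
    (fun w hw => hv.1.contDiffAt (hV.mem_nhds hw)) (fun w hw => (hv.2 w hw).ge)
    (fun w hw hwV => ?_)
  · intro w hw
    linarith [hmax w hw]
  · have hwa : a ≤ ‖w‖ := by simpa using hw.2
    have hwb : ‖w‖ ≤ b := by simpa using hw.1
    rcases hwa.eq_or_lt with heq | hlt
    · have := hsphere w (by simp [heq])
      rw [← heq]
      nlinarith
    · have heq : ‖w‖ = b := hwb.eq_of_not_lt fun h => hwV (by simp [h, hlt])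
      rw [heq]
      linarith [hneg w (hsub hw.1)]

theorem exists_le_mul_log_norm {u : ℂ → ℝ} {a : ℝ} (ha : a ∈ Ioo 0 1)
    (hu : ContinuousOn u (ball 0 1)) (hneg : ∀ w ∈ ball 0 1, u w < 0)
    (hharm : HarmonicOn u (ball 0 1 \ closedBall 0 a)) :
    ∃ c > 0, ∀ w ∈ ball (0 : ℂ) 1 \ closedBall 0 a, u w ≤ c * Real.log ‖w‖ := by
  have hsub : sphere (0 : ℂ) a ⊆ ball 0 1 :=
    sphere_subset_closedBall.trans (closedBall_subset_ball ha.2)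
  obtain ⟨w₀, hw₀, hmax⟩ := (isCompact_sphere (0 : ℂ) a).exists_isMaxOn
    (NormedSpace.sphere_nonempty.2 ha.1.le) (hu.mono hsub)
  have hloga : Real.log a < 0 := Real.log_neg ha.1 ha.2
  have hc : 0 < u w₀ / Real.log a := div_pos_of_neg_of_neg (hneg w₀ (hsub hw₀)) hloga
  refine ⟨u w₀ / Real.log a, hc, fun w hw => ?_⟩
  have hlim : Tendsto (fun b => u w₀ / Real.log a * Real.log ‖w‖ - u w₀ / Real.log a * Real.log b)
      (𝓝[<] 1) (𝓝 (u w₀ / Real.log a * Real.log ‖w‖)) := by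
    simpa using (((Real.continuousAt_log one_ne_zero).tendsto.mono_left
      nhdsWithin_le_nhds).const_mul (u w₀ / Real.log a)).const_sub
        (u w₀ / Real.log a * Real.log ‖w‖)
  simp only [Set.mem_sdiff, mem_ball_zero_iff, mem_closedBall_zero_iff, not_le] at hw
  refine ge_of_tendsto hlim ?_
  filter_upwards [Ioo_mem_nhdsLT hw.1] with b hb
  refine le_mul_log_norm_sub ha.1 ⟨hw.2.trans hb.1, hb.2⟩ hu hneg hharm hc.le (fun y hy => ?_) w
    ⟨by simpa using hb.1.le, by simpa using hw.2.le⟩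
  rw [div_mul_cancel₀ _ hloga.ne]
  exact hmax hy

/-! ### Circular means -/

theorem integral_fderiv_add_fderiv {F G : ℂ → ℝ} {s t a b : ℝ}
    (hF : ∀ ζ ∈ uIcc s t ×ℂ uIcc a b, DifferentiableAt ℝ F ζ)
    (hG : ∀ ζ ∈ uIcc s t ×ℂ uIcc a b, DifferentiableAt ℝ G ζ)
    (hcont : ContinuousOn (fun ζ => fderiv ℝ F ζ 1 + fderiv ℝ G ζ I) (uIcc s t ×ℂ uIcc a b)) :
    ∫ x in s..t, ∫ y in a..b, fderiv ℝ F (x + y * I) 1 + fderiv ℝ G (x + y * I) I =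
      (∫ x in s..t, G (x + b * I)) - (∫ x in s..t, G (x + a * I)) +
        (∫ y in a..b, F (t + y * I)) - ∫ y in a..b, F (s + y * I) := by
  let e : (ℝ × ℝ) ≃L[ℝ] ℂ := equivRealProdCLM.symm
  have he (x y : ℝ) : (x : ℂ) + y * I = e (x, y) := (mk_eq_add_mul_I x y).symm
  have hmaps : MapsTo e (uIcc s t ×ˢ uIcc a b) (uIcc s t ×ℂ uIcc a b) := fun p hp =>
    mem_reProdIm.2 hp
  have hsub : Ioo (min s t) (max s t) ×ˢ Ioo (min a b) (max a b) ⊆ uIcc s t ×ˢ uIcc a b :=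
    prod_mono Ioo_subset_Icc_self Ioo_subset_Icc_self
  have hcomp {H : ℂ → ℝ} (hH : ∀ ζ ∈ uIcc s t ×ℂ uIcc a b, DifferentiableAt ℝ H ζ)
      (p : ℝ × ℝ) (hp : p ∈ uIcc s t ×ˢ uIcc a b) :
      HasFDerivAt (H ∘ e) ((fderiv ℝ H (e p)).comp (e : ℝ × ℝ →L[ℝ] ℂ)) p :=
    (hH _ (hmaps hp)).hasFDerivAt.comp p e.hasFDerivAt
  have he1 : e (1, 0) = 1 := rfl
  have heI : e (0, 1) = I := rfl
  have hdiv := integral2_divergence_prod_of_hasFDerivAt (F ∘ e) (G ∘ e) _ _ s a t b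
    (fun p hp => (hcomp hF p hp).continuousAt.continuousWithinAt)
    (fun p hp => (hcomp hG p hp).continuousAt.continuousWithinAt)
    (fun p hp => hcomp hF p (hsub hp)) (fun p hp => hcomp hG p (hsub hp))
    (ContinuousOn.integrableOn_compact (isCompact_uIcc.prod isCompact_uIcc)
      (hcont.comp e.continuous.continuousOn hmaps))
  simpa only [he, Function.comp_apply, ContinuousLinearMap.comp_apply,
    ContinuousLinearEquiv.coe_coe, he1, heI] using hdiv

/-- Green's formula on a period rectangle, for the vector field
`(P + (t - x) ∂ₓP, (t - x) ∂ᵧP)`, whose divergence is `(t - x) Δ P`. -/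
theorem integral_vertical_eq {P : ℂ → ℝ} {s t T : ℝ}
    (hP : ∀ ζ ∈ uIcc s t ×ℂ uIcc 0 T, ContDiffAt ℝ 2 P ζ) (hper : ∀ ζ, P (ζ + T * I) = P ζ) :
    ∫ y in 0..T, P (t + y * I) =
      (∫ y in 0..T, (P (s + y * I) + (t - s) * fderiv ℝ P (s + y * I) 1)) +
        ∫ x in s..t, ∫ y in 0..T, (t - x) * lap P (x + y * I) := by
  have hre (ζ : ℂ) : HasFDerivAt (fun ζ : ℂ => t - ζ.re) (-reCLM) ζ :=
    reCLM.hasFDerivAt.const_sub t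
  have hD (d : ℂ) {ζ : ℂ} (hζ : ContDiffAt ℝ 2 P ζ) :
      HasFDerivAt (fun ζ => fderiv ℝ P ζ d) (fderiv ℝ (fun ζ => fderiv ℝ P ζ d) ζ) ζ :=
    ((differentiableAt_fderiv_of_contDiffAt hζ).clm_apply (differentiableAt_const d)).hasFDerivAt
  have hF {ζ : ℂ} (hζ : ContDiffAt ℝ 2 P ζ) :
      HasFDerivAt (fun ζ => P ζ + (t - ζ.re) * fderiv ℝ P ζ 1) (fderiv ℝ P ζ +
        ((t - ζ.re) • fderiv ℝ (fun ζ => fderiv ℝ P ζ 1) ζ + fderiv ℝ P ζ 1 • -reCLM)) ζ :=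
    (hζ.differentiableAt two_ne_zero).hasFDerivAt.add ((hre ζ).mul (hD 1 hζ))
  have hG {ζ : ℂ} (hζ : ContDiffAt ℝ 2 P ζ) :
      HasFDerivAt (fun ζ => (t - ζ.re) * fderiv ℝ P ζ I)
        ((t - ζ.re) • fderiv ℝ (fun ζ => fderiv ℝ P ζ I) ζ + fderiv ℝ P ζ I • -reCLM) ζ :=
    (hre ζ).mul (hD I hζ)
  have hdiv {ζ : ℂ} (hζ : ContDiffAt ℝ 2 P ζ) :
      fderiv ℝ (fun ζ => P ζ + (t - ζ.re) * fderiv ℝ P ζ 1) ζ 1 +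
        fderiv ℝ (fun ζ => (t - ζ.re) * fderiv ℝ P ζ I) ζ I = (t - ζ.re) * lap P ζ := by
    rw [(hF hζ).fderiv, (hG hζ).fderiv, lap]
    simp only [smul_neg, add_apply, smul_apply, smul_eq_mul, neg_apply, reCLM_apply, one_re,
      mul_one, add_neg_cancel_comm_assoc, I_re, mul_zero, neg_zero, add_zero]
    ring
  have hperD (ζ d : ℂ) : fderiv ℝ P (ζ + T * I) d = fderiv ℝ P ζ d := by
    rw [← fderiv_comp_add_right, funext hper]
  have hrect := integral_fderiv_add_fderiv (fun ζ hζ => (hF (hP ζ hζ)).differentiableAt)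
    (fun ζ hζ => (hG (hP ζ hζ)).differentiableAt)
    (ContinuousOn.congr (fun ζ hζ => ((hre ζ).continuousAt.mul
      (continuousAt_lap (hP ζ hζ))).continuousWithinAt) fun ζ hζ => hdiv (hP ζ hζ))
  have hint : ∫ x in s..t, ∫ y in 0..T, (t - x) * lap P (x + y * I) = _ :=
    (intervalIntegral.integral_congr fun x hx => intervalIntegral.integral_congr fun y hy => by
      have hxy : (x : ℂ) + y * I ∈ uIcc s t ×ℂ uIcc 0 T := by simp [mem_reProdIm, hx, hy]
      simpa using (hdiv (hP _ hxy)).symm).trans hrect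
  have hper' (x : ℝ) : fderiv ℝ P (x + T * I) I = fderiv ℝ P x I := hperD x I
  rw [hint]
  simp [hper']

theorem setIntegral_reProdIm {f : ℂ → ℝ} {S T : Set ℝ} (hf : IntegrableOn f (S ×ℂ T)) :
    ∫ z in S ×ℂ T, f z = ∫ x in S, ∫ y in T, f (x + y * I) := by
  have he : MeasurePreserving measurableEquivRealProd.symm :=
    volume_preserving_equiv_real_prod.symm _
  have hpre : measurableEquivRealProd.symm ⁻¹' (S ×ℂ T) = S ×ˢ T := rfl
  have heq (x y : ℝ) : measurableEquivRealProd.symm (x, y) = x + y * I := mk_eq_add_mul_I x y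
  have hemb := measurableEquivRealProd.symm.measurableEmbedding
  rw [← he.setIntegral_preimage_emb hemb, hpre, Measure.volume_eq_prod, setIntegral_prod]
  · simp only [heq]
  · rw [← hpre, ← Measure.volume_eq_prod]
    exact (he.integrableOn_comp_preimage hemb).2 hf

theorem integral_sub_mul_lap_le {P : ℂ → ℝ} {s t T : ℝ} (hst : s ≤ t) (ht : t < 0) (hT : 0 ≤ T)
    (hP : ∀ ζ : ℂ, s ≤ ζ.re → ζ.re < 0 → ContDiffAt ℝ 2 P ζ)
    (hlap : ∀ ζ ∈ Ioo s 0 ×ℂ Ioo 0 T, 0 ≤ lap P ζ)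
    (hint : IntegrableOn (fun ζ => ζ.re * lap P ζ) (Ioo s 0 ×ℂ Ioo 0 T)) :
    ∫ x in s..t, ∫ y in 0..T, (t - x) * lap P (x + y * I) ≤
      ∫ ζ in Ioo s 0 ×ℂ Ioo 0 T, -(ζ.re * lap P ζ) := by
  have hsub : Ioo s t ×ℂ Ioo 0 T ⊆ Ioo s 0 ×ℂ Ioo 0 T := fun ζ hζ =>
    ⟨⟨hζ.1.1, hζ.1.2.trans ht⟩, hζ.2⟩
  have hmeas : MeasurableSet (Ioo s t ×ℂ Ioo 0 T) := (isOpen_Ioo.reProdIm isOpen_Ioo).measurableSet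
  have hintt : IntegrableOn (fun ζ => (t - ζ.re) * lap P ζ) (Ioo s t ×ℂ Ioo 0 T) := by
    refine (ContinuousOn.integrableOn_compact (isCompact_Icc.reProdIm isCompact_Icc)
      fun ζ hζ => ContinuousAt.continuousWithinAt ?_).mono_set
      (reProdIm_subset_iff.2 (prod_mono Ioo_subset_Icc_self Ioo_subset_Icc_self))
    exact (continuous_const.sub continuous_re).continuousAt.mul
      (continuousAt_lap (hP ζ hζ.1.1 (hζ.1.2.trans_lt ht)))
  calc ∫ x in s..t, ∫ y in 0..T, (t - x) * lap P (x + y * I)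
      = ∫ ζ in Ioo s t ×ℂ Ioo 0 T, (t - ζ.re) * lap P ζ := by
        simp only [setIntegral_reProdIm hintt, intervalIntegral.integral_of_le, hst, hT,
          integral_Ioc_eq_integral_Ioo]
        simp
    _ ≤ ∫ ζ in Ioo s t ×ℂ Ioo 0 T, -(ζ.re * lap P ζ) := by
        refine setIntegral_mono_on hintt (hint.mono_set hsub).neg hmeas fun ζ hζ => ?_
        nlinarith [hlap ζ (hsub hζ)]
    _ ≤ ∫ ζ in Ioo s 0 ×ℂ Ioo 0 T, -(ζ.re * lap P ζ) := by
        refine setIntegral_mono_set hint.neg ?_ hsub.eventuallyLE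
        filter_upwards [ae_restrict_mem (isOpen_Ioo.reProdIm isOpen_Ioo).measurableSet] with ζ hζ
        exact neg_nonneg.2 (mul_nonpos_of_nonpos_of_nonneg hζ.1.2.le (hlap ζ hζ))

theorem exists_integral_vertical_le {P : ℂ → ℝ} {s T : ℝ} (hT : 0 ≤ T)
    (hP : ∀ ζ : ℂ, s ≤ ζ.re → ζ.re < 0 → ContDiffAt ℝ 2 P ζ) (hper : ∀ ζ, P (ζ + T * I) = P ζ)
    (hlap : ∀ ζ ∈ Ioo s 0 ×ℂ Ioo 0 T, 0 ≤ lap P ζ)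
    (hint : IntegrableOn (fun ζ => ζ.re * lap P ζ) (Ioo s 0 ×ℂ Ioo 0 T)) :
    ∃ C, ∀ t ∈ Ico s 0, ∫ y in 0..T, P (t + y * I) ≤ C := by
  rcases le_or_gt 0 s with hs | hs
  · exact ⟨0, fun t ht => absurd (hs.trans ht.1) ht.2.not_ge⟩
  have hPs (y : ℝ) : ContDiffAt ℝ 2 P (s + y * I) := hP _ (by simp) (by simpa using hs)
  have hline (y : ℝ) : ContinuousAt (fun y : ℝ => (s : ℂ) + y * I) y := by fun_prop
  have hcont : Continuous fun y : ℝ => P (s + y * I) := continuous_iff_continuousAt.2 fun y =>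
    (hPs y).continuousAt.comp (f := fun y : ℝ => (s : ℂ) + y * I) (hline y)
  have hcontD : Continuous fun y : ℝ => fderiv ℝ P (s + y * I) 1 :=
    continuous_iff_continuousAt.2 fun y =>
      ((differentiableAt_fderiv_of_contDiffAt (hPs y)).continuousAt.clm_apply
        continuousAt_const).comp (f := fun y : ℝ => (s : ℂ) + y * I) (hline y)
  set A := ∫ y in 0..T, P (s + y * I)
  set B := ∫ y in 0..T, fderiv ℝ P (s + y * I) 1
  set J := ∫ ζ in Ioo s 0 ×ℂ Ioo 0 T, -(ζ.re * lap P ζ)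
  refine ⟨A + -s * |B| + J, fun t ht => ?_⟩
  have hrect (ζ : ℂ) (hζ : ζ ∈ uIcc s t ×ℂ uIcc 0 T) : ContDiffAt ℝ 2 P ζ := by
    rw [uIcc_of_le ht.1] at hζ
    exact hP ζ hζ.1.1 (hζ.1.2.trans_lt ht.2)
  have hB : (t - s) * B ≤ -s * |B| :=
    (mul_le_mul_of_nonneg_left (le_abs_self B) (sub_nonneg.2 ht.1)).trans
      (mul_le_mul_of_nonneg_right (by linarith [ht.2]) (abs_nonneg B))
  calc ∫ y in 0..T, P (t + y * I)
      = A + (t - s) * B + ∫ x in s..t, ∫ y in 0..T, (t - x) * lap P (x + y * I) := by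
        rw [integral_vertical_eq hrect hper, intervalIntegral.integral_add
          (hcont.intervalIntegrable _ _) ((hcontD.const_mul _).intervalIntegrable _ _),
          intervalIntegral.integral_const_mul]
    _ ≤ A + -s * |B| + J := by
        gcongr
        exact integral_sub_mul_lap_le ht.1 ht.2 hT hP hlap hint

theorem injOn_exp_reProdIm_Ioo (S : Set ℝ) : InjOn exp (S ×ℂ Ioo 0 (2 * π)) := by
  intro ζ hζ ξ hξ h
  obtain ⟨n, hn⟩ := exp_eq_exp_iff_exists_int.1 h
  have him : ζ.im = ξ.im + n * (2 * π) := by simpa using congr_arg im hn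
  have hlt : (n : ℝ) * (2 * π) < 1 * (2 * π) := by linarith [hζ.2.2, hξ.2.1]
  have hgt : (-1 : ℝ) * (2 * π) < n * (2 * π) := by linarith [hζ.2.1, hξ.2.2]
  have hn1 : (n : ℝ) < 1 := lt_of_mul_lt_mul_right hlt Real.two_pi_pos.le
  have hn0 : (-1 : ℝ) < n := lt_of_mul_lt_mul_right hgt Real.two_pi_pos.le
  norm_cast at hn0 hn1
  obtain rfl : n = 0 := by lia
  simpa using hn

theorem exists_circleAverage_le {G : ℂ → ℝ} {a : ℝ} (ha : a ∈ Ioo 0 1)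
    (hG : ContDiffOn ℝ 2 G (ball 0 1 \ closedBall 0 a))
    (hlap : ∀ w ∈ ball 0 1 \ closedBall 0 a, 0 ≤ lap G w)
    (hint : IntegrableOn (fun w => Real.log ‖w‖ * lap G w) (ball 0 1 \ closedBall 0 a)) :
    ∃ C, ∀ᶠ R in 𝓝[<] (1 : ℝ), Real.circleAverage G 0 R ≤ C := by
  let A : Set ℂ := ball 0 1 \ closedBall 0 a
  have hA : IsOpen A := isOpen_ball.sdiff isClosed_closedBall
  let V : Set ℂ := re ⁻¹' Ioo (Real.log a) 0
  have hV : IsOpen V := isOpen_Ioo.preimage continuous_re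
  have hVA : MapsTo exp V A := fun ζ hζ => by
    simp [A, norm_exp, hζ.2, (Real.log_lt_iff_lt_exp ha.1).1 hζ.1]
  have hP : ContDiffOn ℝ 2 (fun ζ => G (exp ζ)) V :=
    contDiffOn_comp_holomorphic hV differentiable_exp.differentiableOn hVA hG
  obtain ⟨b, hab, hb⟩ := exists_between ha.2
  have hb0 : 0 < b := ha.1.trans hab
  have hlog : Real.log a < Real.log b := Real.log_lt_log ha.1 hab
  let W : Set ℂ := Ioo (Real.log b) 0 ×ℂ Ioo 0 (2 * π)
  have hWV : W ⊆ V := fun ζ hζ => ⟨hlog.trans hζ.1.1, hζ.1.2⟩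
  have hinj : InjOn exp W := injOn_exp_reProdIm_Ioo _
  have hlapW (ζ : ℂ) (hζ : ζ ∈ W) : 0 ≤ lap (fun ζ => G (exp ζ)) ζ := by
    rw [lap_comp_holomorphic analyticAt_cexp (hG.contDiffAt (hA.mem_nhds (hVA (hWV hζ))))]
    exact mul_nonneg (sq_nonneg _) (hlap _ (hVA (hWV hζ)))
  have hintW : IntegrableOn (fun ζ => ζ.re * lap (fun ζ => G (exp ζ)) ζ) W := by
    simpa only [norm_exp, Real.log_exp] using integrableOn_mul_lap_comp
      (isOpen_Ioo.reProdIm isOpen_Ioo) differentiable_exp.differentiableOn hinj hA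
      (hVA.mono_left hWV) hG hint
  obtain ⟨C, hC⟩ := exists_integral_vertical_le (P := fun ζ => G (exp ζ)) Real.two_pi_pos.le
    (fun ζ hζ hζ0 => hP.contDiffAt (hV.mem_nhds ⟨hlog.trans_le hζ, hζ0⟩))
    (fun ζ => by simp [exp_add, exp_two_pi_mul_I]) hlapW hintW
  refine ⟨(2 * π)⁻¹ * C, ?_⟩
  filter_upwards [Ioo_mem_nhdsLT hb] with R hR
  have hR0 : 0 < R := hb0.trans hR.1
  have hcircle (θ : ℝ) : exp (Real.log R + θ * I) = circleMap 0 R θ := by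
    rw [exp_add, ← ofReal_exp, Real.exp_log hR0, circleMap_zero]
  rw [Real.circleAverage_def, smul_eq_mul]
  gcongr
  simpa only [hcircle] using
    hC (Real.log R) ⟨Real.log_le_log hb0 hR.1.le, Real.log_neg hR0 hR.2⟩

/-! ### Harmonic majorants on the unit disc -/

theorem exists_re_mul_eq_re_of_mem_span_fourier {R : ℝ} (hR : 0 < R)
    {g : C(AddCircle (2 * π), ℂ)} (hg : g ∈ Submodule.span ℂ (range (@fourier (2 * π)))) (c : ℂ) :
    ∃ Q : ℂ → ℂ, Differentiable ℂ Q ∧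
      ∀ θ : ℝ, (c * g θ).re = (Q (circleMap 0 R θ)).re := by
  induction hg using Submodule.span_induction generalizing c with
  | mem _ hx =>
    obtain ⟨n, rfl⟩ := hx
    have hcircle (θ : ℝ) : circleMap 0 R θ / R = exp (θ * I) := by
      rw [circleMap_zero, mul_div_cancel_left₀ _ (mod_cast hR.ne')]
    have hfourier (k : ℕ) (θ : ℝ) :
        fourier (T := 2 * π) (k : ℤ) θ = (circleMap 0 R θ / R) ^ k := by
      rw [fourier_coe_apply, hcircle, ← exp_nat_mul]
      congr 1
      push_cast
      field_simp [ofReal_ne_zero.2 Real.pi_ne_zero]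
    obtain ⟨k, rfl | rfl⟩ := n.eq_nat_or_neg
    · exact ⟨fun w => c * (w / R) ^ k, by fun_prop, fun θ => by rw [hfourier]⟩
    · refine ⟨fun w => starRingEnd ℂ c * (w / R) ^ k, by fun_prop, fun θ => ?_⟩
      rw [fourier_neg, hfourier, ← conj_re, map_mul, conj_conj]
  | zero => exact ⟨0, differentiable_const 0, fun θ => by simp⟩
  | add _ _ _ _ hx hy =>
    obtain ⟨Q₁, hQ₁, h₁⟩ := hx c
    obtain ⟨Q₂, hQ₂, h₂⟩ := hy c
    exact ⟨Q₁ + Q₂, hQ₁.add hQ₂, fun θ => by simp [mul_add, ← h₁, ← h₂]⟩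
  | smul a _ _ hx =>
    obtain ⟨Q, hQ, h⟩ := hx (c * a)
    exact ⟨Q, hQ, fun θ => by simp [← h, mul_assoc]⟩

theorem exists_differentiable_re_near {R ε : ℝ} (hR : 0 < R) (hε : 0 < ε) {G : ℂ → ℝ}
    (hG : ContinuousOn G (sphere 0 R)) :
    ∃ Q : ℂ → ℂ, Differentiable ℂ Q ∧ ∀ w ∈ sphere (0 : ℂ) R, |(Q w).re - G w| < ε := by
  have : Fact (0 < 2 * π) := ⟨Real.two_pi_pos⟩
  have hper : Function.Periodic (fun θ : ℝ => (G (circleMap 0 R θ) : ℂ)) (2 * π) :=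
    fun θ => by simp only [periodic_circleMap 0 R θ]
  have hcont : Continuous fun θ : ℝ => (G (circleMap 0 R θ) : ℂ) :=
    continuous_ofReal.comp (hG.comp_continuous (continuous_circleMap 0 R)
      (circleMap_mem_sphere 0 hR.le))
  let g : C(AddCircle (2 * π), ℂ) := ⟨hper.lift, continuous_coinduced_dom.2 hcont⟩
  have hg : g ∈ (Submodule.span ℂ (range (@fourier (2 * π)))).topologicalClosure := by
    rw [span_fourier_closure_eq_top]
    trivial
  obtain ⟨q, hq, hgq⟩ := Metric.mem_closure_iff.1 hg ε hε
  obtain ⟨Q, hQ, hQq⟩ := exists_re_mul_eq_re_of_mem_span_fourier hR hq 1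
  refine ⟨Q, hQ, fun w hw => ?_⟩
  obtain ⟨θ, rfl⟩ : w ∈ range (circleMap 0 R) := by rwa [range_circleMap, abs_of_pos hR]
  have hgθ : g θ = G (circleMap 0 R θ) := hper.lift_coe θ
  calc |(Q (circleMap 0 R θ)).re - G (circleMap 0 R θ)| = |(q θ - g θ).re| := by
        rw [← hQq, one_mul, sub_re, hgθ, ofReal_re]
    _ ≤ ‖q θ - g θ‖ := abs_re_le_norm _
    _ ≤ dist q g := by rw [← dist_eq_norm]; exact ContinuousMap.dist_apply_le_dist _
    _ < ε := by rwa [dist_comm]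

theorem exists_differentiable_le_re {G : ℂ → ℝ} {R ε : ℝ} (hR : 0 < R) (hε : 0 < ε)
    (hGc : ContinuousOn G (closedBall 0 R)) (hG : ∀ w ∈ ball 0 R, ContDiffAt ℝ 2 G w)
    (hlap : ∀ w ∈ ball 0 R, 0 ≤ lap G w) :
    ∃ Q : ℂ → ℂ, Differentiable ℂ Q ∧ (∀ w ∈ closedBall 0 R, G w ≤ (Q w).re) ∧
      (Q 0).re ≤ Real.circleAverage G 0 R + ε ∧ (Q 0).im = 0 := by
  obtain ⟨Q₀, hQ₀, hnear⟩ := exists_differentiable_re_near hR (half_pos hε)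
    (hGc.mono sphere_subset_closedBall)
  let Q : ℂ → ℂ := fun w => Q₀ w + (ε / 2 : ℝ) - (Q₀ 0).im * I
  have hQ : Differentiable ℂ Q := (hQ₀.add_const _).sub_const _
  have hre (w : ℂ) : (Q w).re = (Q₀ w).re + ε / 2 := by simp [Q]
  have hharm (w : ℂ) : InnerProductSpace.HarmonicAt (fun w => (Q w).re) w :=
    (hQ.analyticAt w).harmonicAt_re
  have hcont : Continuous fun w => (Q w).re := continuous_re.comp hQ.continuous
  refine ⟨Q, hQ, fun w hw => ?_, ?_, by simp [Q]⟩
  · suffices h : G w + -1 * (Q w).re ≤ 0 by linarith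
    refine le_of_lap_nonneg (u := fun w => G w + -1 * (Q w).re)
      (isCompact_closedBall 0 R) isOpen_ball ball_subset_closedBall
      (hGc.add (hcont.const_mul (-1)).continuousOn)
      (fun z hz => (hG z hz).add (contDiffAt_const.mul (hharm z).1)) (fun z hz => ?_)
      (fun z hz hz' => ?_) w hw
    · rw [lap_add (hG z hz) (contDiffAt_const.mul (hharm z).1), lap_const_mul _ (hharm z).1,
        lap_eq_zero_of_harmonicAt (hharm z)]
      simpa using hlap z hz
    · have hz : z ∈ sphere 0 R := by
        rw [← closedBall_sdiff_ball]
        exact ⟨hz, hz'⟩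
      linarith [(abs_lt.1 (hnear z hz)).1, hre z]
  · have hGi : CircleIntegrable G 0 R :=
      (hGc.mono sphere_subset_closedBall).circleIntegrable hR.le
    have hmean : Real.circleAverage (fun w => (Q w).re) 0 R = (Q 0).re :=
      InnerProductSpace.HarmonicOnNhd.circleAverage_eq fun w _ => hharm w
    rw [← hmean, ← Real.circleAverage_const ε 0 R,
      ← Real.circleAverage_add hGi (circleIntegrable_const ε 0 R)]
    refine Real.circleAverage_mono hcont.continuousOn.circleIntegrable'
      (hGi.add (circleIntegrable_const ε 0 R)) fun w hw => ?_
    rw [abs_of_pos hR] at hw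
    simp only [Pi.add_apply]
    linarith [(abs_lt.1 (hnear w hw)).2, hre w]

theorem norm_le_of_re_nonneg {F : ℂ → ℂ} {R r : ℝ} {w : ℂ} (hF : DifferentiableOn ℂ F (ball 0 R))
    (hre : ∀ z ∈ ball 0 R, 0 ≤ (F z).re) (hr : r < R) (hw : w ∈ closedBall 0 r) :
    ‖F w‖ ≤ 2 * r / (R - r) + ‖F 0‖ * (R + r) / (R - r) := by
  have hwr : ‖w‖ ≤ r := mem_closedBall_zero_iff.1 hw
  have hwR : ‖w‖ < R := hwr.trans_lt hr
  have hR : 0 < R := (norm_nonneg w).trans_lt hwR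
  have hbound := borelCaratheodory (M := 1) (z := w) one_pos hF.neg
    (fun z hz => by simpa using (neg_nonpos.2 (hre z hz)).trans zero_le_one) hR
    (mem_ball_zero_iff.2 hwR)
  simp only [Pi.neg_apply, norm_neg, mul_one] at hbound
  refine hbound.trans ?_
  have hr0 : 0 ≤ r := (norm_nonneg w).trans hwr
  have : 0 < R - r := sub_pos.2 hr
  gcongr

/-- Montel's theorem; along an ultrafilter no subsequence has to be extracted. -/
theorem exists_tendstoLocallyUniformlyOn_of_norm_le {ι : Type*} (l : Ultrafilter ι)
    {F : ι → ℂ → ℂ} {U : Set ℂ} (hF : ∀ i, DifferentiableOn ℂ (F i) U)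
    (hbound : ∀ z ∈ U, ∃ r > 0, ball z r ⊆ U ∧ ∃ B, ∀ᶠ i in l, ∀ w ∈ ball z r, ‖F i w‖ ≤ B) :
    ∃ f : ℂ → ℂ, TendstoLocallyUniformlyOn F f l U := by
  have hlim (z : ℂ) (hz : z ∈ U) : ∃ y, Tendsto (fun i => F i z) l (𝓝 y) := by
    obtain ⟨r, hr, -, B, hB⟩ := hbound z hz
    obtain ⟨y, -, hy⟩ := (isCompact_closedBall (0 : ℂ) B).ultrafilter_le_nhds
      (l.map fun i => F i z) (le_principal_iff.2 <| hB.mono fun i hi =>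
        mem_closedBall_zero_iff.2 (hi z (mem_ball_self hr)))
    exact ⟨y, hy⟩
  choose! f hf using hlim
  refine ⟨f, Metric.tendstoLocallyUniformlyOn_iff.2 fun ε hε z hz => ?_⟩
  obtain ⟨r, hr, hrU, B, hB⟩ := hbound z hz
  have hlip : ∀ᶠ i in l, ∀ w ∈ ball z r, dist (F i w) (F i z) ≤ 2 * B / r * dist w z := by
    filter_upwards [hB] with i hi w hw
    refine dist_le_div_mul_dist_of_mapsTo_ball ((hF i).mono hrU) (fun v hv => ?_) hw
    rw [mem_closedBall, dist_eq_norm]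
    linarith [norm_sub_le (F i v) (F i z), hi v hv, hi z (mem_ball_self hr)]
  have hlip' (w : ℂ) (hw : w ∈ ball z r) : dist (f w) (f z) ≤ 2 * B / r * dist w z :=
    le_of_tendsto ((hf w (hrU hw)).dist (hf z hz)) (hlip.mono fun i hi => hi w hw)
  have hsmall : ∀ᶠ w in 𝓝 z, 2 * B / r * dist w z < ε / 3 := by
    refine ContinuousAt.eventually_lt (by fun_prop) continuousAt_const ?_
    simpa using hε
  refine ⟨_, mem_nhdsWithin_of_mem_nhds (inter_mem hsmall (ball_mem_nhds z hr)), ?_⟩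
  filter_upwards [hlip, (hf z hz).eventually (ball_mem_nhds _ (by positivity : 0 < ε / 3))]
    with i hi hiz w hw
  have hsmallw : 2 * B / r * dist w z < ε / 3 := hw.1
  calc dist (f w) (F i w) ≤ dist (f w) (f z) + dist (f z) (F i z) + dist (F i z) (F i w) :=
        dist_triangle4 _ _ _ _
    _ < ε := by
        rw [dist_comm (f z), dist_comm (F i z) (F i w)]
        linarith [hlip' w hw.2, hi w hw.2, mem_ball.1 hiz]

theorem exists_tendstoLocallyUniformlyOn_of_re_nonneg {ι : Type*} (l : Ultrafilter ι)
    {F : ι → ℂ → ℂ} {R M : ℝ} (hF : ∀ i, DifferentiableOn ℂ (F i) (ball 0 R))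
    (hre : ∀ r < R, ∀ᶠ i in l, ∀ w ∈ ball 0 r, 0 ≤ (F i w).re) (hM : ∀ᶠ i in l, ‖F i 0‖ ≤ M) :
    ∃ f : ℂ → ℂ, TendstoLocallyUniformlyOn F f l (ball 0 R) := by
  refine exists_tendstoLocallyUniformlyOn_of_norm_le l hF fun z hz => ?_
  obtain ⟨r, hzr, hr⟩ := exists_between (mem_ball_zero_iff.1 hz)
  obtain ⟨s, hrs, hs⟩ := exists_between hr
  have hsub : ball z (r - ‖z‖) ⊆ ball 0 r := ball_subset_ball' (by simp)
  have hr0 : 0 ≤ r := (norm_nonneg z).trans hzr.le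
  have hs0 : 0 ≤ s := hr0.trans hrs.le
  have : 0 < s - r := sub_pos.2 hrs
  refine ⟨r - ‖z‖, sub_pos.2 hzr, hsub.trans (ball_subset_ball hr.le),
    2 * r / (s - r) + M * (s + r) / (s - r), ?_⟩
  filter_upwards [hre s hs, hM] with i hi hMi w hw
  refine (norm_le_of_re_nonneg ((hF i).mono (ball_subset_ball hs.le)) hi hrs
    (ball_subset_closedBall (hsub hw))).trans ?_
  gcongr

theorem exists_differentiableOn_le_re_of_circleAverage_le {G : ℂ → ℝ} {C : ℝ}
    (hG : ∀ w ∈ ball 0 1, ContDiffAt ℝ 2 G w) (hlap : ∀ w ∈ ball 0 1, 0 ≤ lap G w)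
    (hnonneg : ∀ w ∈ ball 0 1, 0 ≤ G w)
    (hmean : ∀ᶠ R in 𝓝[<] (1 : ℝ), Real.circleAverage G 0 R ≤ C) :
    ∃ F : ℂ → ℂ, DifferentiableOn ℂ F (ball 0 1) ∧ ∀ w ∈ ball 0 1, G w ≤ (F w).re := by
  have hsub {R : ℝ} (hR : R < 1) : closedBall (0 : ℂ) R ⊆ ball 0 1 := closedBall_subset_ball hR
  have hexists (R : ℝ) : ∃ Q : ℂ → ℂ, Differentiable ℂ Q ∧ (R ∈ Ioo 0 1 →
      (∀ w ∈ closedBall 0 R, G w ≤ (Q w).re) ∧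
        ‖Q 0‖ ≤ Real.circleAverage G 0 R + 1) := by
    by_cases hR : R ∈ Ioo 0 1
    · obtain ⟨Q, hQ, hle, hre, him⟩ := exists_differentiable_le_re hR.1 one_pos
        (fun w hw => (hG w (hsub hR.2 hw)).continuousAt.continuousWithinAt)
        (fun w hw => hG w (hsub hR.2 (ball_subset_closedBall hw)))
        (fun w hw => hlap w (hsub hR.2 (ball_subset_closedBall hw)))
      have hpos : 0 ≤ (Q 0).re := (hnonneg 0 (by simp)).trans (hle 0 (by simp [hR.1.le]))
      refine ⟨Q, hQ, fun _ => ⟨hle, ?_⟩⟩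
      rwa [← abs_re_eq_norm.2 him, abs_of_nonneg hpos]
    · exact ⟨0, differentiable_const 0, fun h => absurd h hR⟩
  choose Q hQ hQR using hexists
  let l : Ultrafilter ℝ := Ultrafilter.of (𝓝[<] 1)
  have hl : (l : Filter ℝ) ≤ 𝓝[<] 1 := Ultrafilter.of_le _
  have hle (r : ℝ) (hr : r < 1) : ∀ᶠ R in l, ∀ w ∈ ball 0 r, G w ≤ (Q R w).re := by
    filter_upwards [hl (Ioo_mem_nhdsLT (max_lt hr one_pos))] with R hR w hw
    exact (hQR R ⟨(le_max_right r 0).trans_lt hR.1, hR.2⟩).1 w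
      (ball_subset_closedBall (ball_subset_ball ((le_max_left r 0).trans hR.1.le) hw))
  have hzero : ∀ᶠ R in l, ‖Q R 0‖ ≤ C + 1 := by
    filter_upwards [hl (Ioo_mem_nhdsLT one_pos), hl hmean] with R hR hRC
    linarith [(hQR R hR).2]
  obtain ⟨F, hF⟩ := exists_tendstoLocallyUniformlyOn_of_re_nonneg l (R := 1)
    (fun R => (hQ R).differentiableOn) (fun r hr => (hle r hr).mono fun R hR w hw =>
      (hnonneg w (ball_subset_ball hr.le hw)).trans (hR w hw)) hzero
  refine ⟨F, hF.differentiableOn (.of_forall fun R => (hQ R).differentiableOn) isOpen_ball,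
    fun w hw => ?_⟩
  obtain ⟨r, hwr, hr⟩ := exists_between (mem_ball_zero_iff.1 hw)
  exact ge_of_tendsto ((continuous_re.tendsto _).comp (hF.tendsto_at hw))
    ((hle r hr).mono fun R hR => hR w (mem_ball_zero_iff.2 hwr))

/-! ### Poletsky–Stessin and classical Hardy spaces -/

theorem exists_differentiableOn_le_re_of_integrableOn {u G : ℂ → ℝ} {a : ℝ} (ha : a ∈ Ioo (0 : ℝ) 1)
    (hu : ContinuousOn u (ball 0 1)) (hneg : ∀ w ∈ ball (0 : ℂ) 1, u w < 0)
    (hharm : HarmonicOn u (ball 0 1 \ closedBall 0 a)) (hG : ContDiffOn ℝ 2 G (ball 0 1))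
    (hlap : ∀ w ∈ ball (0 : ℂ) 1, 0 ≤ lap G w) (hnonneg : ∀ w ∈ ball (0 : ℂ) 1, 0 ≤ G w)
    (hint : IntegrableOn (fun w => u w * lap G w) (ball 0 1)) :
    ∃ F : ℂ → ℂ, DifferentiableOn ℂ F (ball 0 1) ∧ ∀ w ∈ ball (0 : ℂ) 1, G w ≤ (F w).re := by
  obtain ⟨c, hc, hle⟩ := exists_le_mul_log_norm ha hu hneg hharm
  have hsub : ball (0 : ℂ) 1 \ closedBall 0 a ⊆ ball 0 1 := sdiff_subset
  have hopen : IsOpen (ball (0 : ℂ) 1 \ closedBall 0 a) := isOpen_ball.sdiff isClosed_closedBall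
  have hne : ∀ w ∈ ball (0 : ℂ) 1 \ closedBall 0 a, w ≠ 0 := by
    rintro w hw rfl
    exact hw.2 (mem_closedBall_self ha.1.le)
  have hmeas : AEStronglyMeasurable (fun w => Real.log ‖w‖ * lap G w)
      (volume.restrict (ball 0 1 \ closedBall 0 a)) :=
    ((continuousOn_id.norm.log fun w hw => norm_ne_zero_iff.2 (hne w hw)).mul
      (continuousOn_lap hopen (hG.mono hsub))).aestronglyMeasurable hopen.measurableSet
  have hlog : IntegrableOn (fun w => Real.log ‖w‖ * lap G w) (ball 0 1 \ closedBall 0 a) := by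
    refine ((hint.mono_set hsub).const_mul c⁻¹).mono hmeas ?_
    filter_upwards [ae_restrict_mem hopen.measurableSet] with w hw
    have hlog_nonpos : Real.log ‖w‖ ≤ 0 :=
      Real.log_nonpos (norm_nonneg w) (mem_ball_zero_iff.1 hw.1).le
    rw [norm_mul, norm_mul, norm_mul, ← mul_assoc, Real.norm_of_nonpos hlog_nonpos,
      Real.norm_of_nonpos (hneg w hw.1).le, Real.norm_of_nonneg (inv_pos.2 hc).le]
    gcongr
    rw [inv_mul_eq_div, le_div_iff₀ hc]
    linarith [hle w hw]
  obtain ⟨C, hC⟩ := exists_circleAverage_le ha (hG.mono hsub) (fun w hw => hlap w hw.1) hlog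
  exact exists_differentiableOn_le_re_of_circleAverage_le
    (fun w hw => hG.contDiffAt (isOpen_ball.mem_nhds hw)) hlap hnonneg hC

theorem IsHarmonicExhaustion.exists_differentiableOn_le_re {K : Set ℂ} {φ g : ℂ → ℝ} {ψ : ℂ → ℂ}
    {m : ℝ} (hφ : IsHarmonicExhaustion φ (ψ '' ball 0 1) K m)
    (hψ : DifferentiableOn ℂ ψ (ball 0 1)) (hinj : InjOn ψ (ball 0 1))
    (hg : ContDiffOn ℝ 2 g (ψ '' ball 0 1)) (hlap : ∀ z ∈ ψ '' ball 0 1, 0 ≤ lap g z)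
    (hnonneg : ∀ z ∈ ψ '' ball 0 1, 0 ≤ g z)
    (hint : IntegrableOn (fun z => φ z * lap g z) (ψ '' ball 0 1)) :
    ∃ F : ℂ → ℂ, DifferentiableOn ℂ F (ψ '' ball 0 1) ∧
      ∀ z ∈ ψ '' ball 0 1, g z ≤ (F z).re := by
  have hmaps : MapsTo ψ (ball 0 1) (ψ '' ball 0 1) := mapsTo_image _ _
  set τ := Function.invFunOn ψ (ball 0 1)
  have hτ : DifferentiableOn ℂ τ (ψ '' ball 0 1) := differentiableOn_invFunOn isOpen_ball hψ hinj
  have hτmaps : MapsTo τ (ψ '' ball 0 1) (ball 0 1) := fun z hz => Function.invFunOn_mem hz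
  have hψτ : ∀ z ∈ ψ '' ball 0 1, ψ (τ z) = z := fun z hz => Function.invFunOn_eq hz
  obtain ⟨a, ha, hKa⟩ := exists_pos_lt_subset_ball one_pos
    (hφ.isCompact.image_of_continuousOn (hτ.continuousOn.mono hφ.subset)).isClosed
    (image_subset_iff.2 fun z hz => hτmaps (hφ.subset hz))
  have hmapsK : MapsTo ψ (ball 0 1 \ closedBall 0 a) (ψ '' ball 0 1 \ K) := fun w hw =>
    ⟨hmaps hw.1, fun hwK => hw.2 (ball_subset_closedBall (hKa
      ⟨ψ w, hwK, hinj.leftInvOn_invFunOn hw.1⟩))⟩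
  obtain ⟨F, hF, hle⟩ := exists_differentiableOn_le_re_of_integrableOn
    (u := fun w => φ (ψ w)) (G := fun w => g (ψ w)) ha
    (hφ.continuousOn.comp hψ.continuousOn hmaps) (fun w hw => hφ.neg _ (hmaps hw))
    (hφ.harmonicOn.comp_holomorphic (isOpen_ball.sdiff isClosed_closedBall) hφ.isOpen_diff
      (hψ.mono sdiff_subset) hmapsK)
    (contDiffOn_comp_holomorphic isOpen_ball hψ hmaps hg)
    (fun w hw => by
      rw [lap_comp_holomorphic (hψ.analyticAt (isOpen_ball.mem_nhds hw))
        (hg.contDiffAt (hφ.isOpen.mem_nhds (hmaps hw)))]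
      exact mul_nonneg (sq_nonneg _) (hlap _ (hmaps hw)))
    (fun w hw => hnonneg _ (hmaps hw))
    (integrableOn_mul_lap_comp isOpen_ball hψ hinj hφ.isOpen hmaps hg hint)
  refine ⟨fun z => F (τ z), hF.comp hτ hτmaps, fun z hz => ?_⟩
  simpa only [hψτ z hz] using hle _ (hτmaps hz)

theorem IsHarmonicExhaustion.exists_harmonicOn_ge {K : Set ℂ} {φ : ℂ → ℝ} {ψ f : ℂ → ℂ} {m p : ℝ}
    {ν : Measure ℂ} {μfam : ℝ → Measure ℂ} (hφ : IsHarmonicExhaustion φ (ψ '' ball 0 1) K m)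
    (hψ : DifferentiableOn ℂ ψ (ball 0 1)) (hinj : InjOn ψ (ball 0 1)) (hp : 0 ≤ p)
    (hν : IsRieszMeasure φ (ψ '' ball 0 1) ν)
    (hμ : ∀ r < 0, IsMAMeasure φ (ψ '' ball 0 1) ν r (μfam r))
    (hf : DifferentiableOn ℂ f (ψ '' ball 0 1)) (hfin : psNormPow p μfam f < ⊤) :
    ∃ h : ℂ → ℝ, HarmonicOn h (ψ '' ball 0 1) ∧ ∀ z ∈ ψ '' ball 0 1, ‖f z‖ ^ p ≤ h z := by
  have hfan : ∀ z ∈ ψ '' ball 0 1, AnalyticAt ℂ f z := fun z hz =>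
    hf.analyticAt (hφ.isOpen.mem_nhds hz)
  have hg : ContDiffOn ℝ 2 (smoothNormRpow p f) (ψ '' ball 0 1) := fun z hz =>
    (contDiffAt_smoothNormRpow p (hfan z hz)).contDiffWithinAt
  have hlap : ∀ z ∈ ψ '' ball 0 1, 0 ≤ lap (smoothNormRpow p f) z := fun z hz =>
    lap_smoothNormRpow_nonneg hp (hfan z hz)
  obtain ⟨M, hM⟩ := hφ.eventually_integral_le hν hμ
    (fun z _ => (abs_of_nonneg (smoothNormRpow_nonneg p f z)).trans_le (smoothNormRpow_le hp f z))
    hfin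
  obtain ⟨F, hF, hle⟩ := hφ.exists_differentiableOn_le_re hψ hinj hg hlap
    (fun z _ => smoothNormRpow_nonneg p f z) (hφ.integrableOn_mul_lap hν hμ hg hlap hM)
  exact ⟨fun z => (F z).re, harmonicOn_of_harmonicAt fun z hz =>
    (hF.analyticAt (hφ.isOpen.mem_nhds hz)).harmonicAt_re,
    fun z hz => (norm_rpow_le_smoothNormRpow hp f z).trans (hle z hz)⟩

theorem stmt0_general {Ω K : Set ℂ} {φ : ℂ → ℝ} {ψ : ℂ → ℂ} {p : ℝ} {ν : Measure ℂ}
    {μfam : ℝ → Measure ℂ} (hψ : DifferentiableOn ℂ ψ (ball 0 1)) (hinj : InjOn ψ (ball 0 1))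
    (hΩ : ψ '' ball 0 1 = Ω) (hφ : IsNegExhaustion φ Ω) (hK : IsCompact K) (hKΩ : K ⊆ Ω)
    (hharm : HarmonicOn φ (Ω \ K)) (hp : 0 ≤ p) (hν : IsRieszMeasure φ Ω ν)
    (hμ : ∀ r < 0, IsMAMeasure φ Ω ν r (μfam r)) :
    {f : ℂ → ℂ | MemPS p Ω μfam f} = {f : ℂ → ℂ | MemHClassical p Ω f} := by
  subst hΩ
  obtain ⟨m, hφm⟩ := hφ.exists_isHarmonicExhaustion (isOpen_image_of_injOn isOpen_ball hψ hinj)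
    hK hKΩ hharm
  ext f
  constructor
  · rintro ⟨hf, hfin⟩
    exact ⟨hf, hφm.exists_harmonicOn_ge hψ hinj hp hν hμ hf hfin⟩
  · rintro ⟨hf, h, hh, hfh⟩
    exact ⟨hf, hφm.psNormPow_lt_top_of_harmonicOn hν hμ hh hfh⟩

/-- If `φ` is a negative continuous subharmonic exhaustion of a bounded
domain `Ω ∋ 0` bounded by an analytic Jordan curve, harmonic off a compact `K ⊆ Ω`, then for
`p > 0` the Poletsky–Stessin Hardy space `H^p_φ(Ω)` coincides with the classical `H^p(Ω)`:
`f ∈ H^p_φ(Ω)` iff `|f|^p` has a harmonic majorant on `Ω`. -/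
theorem stmt0 (Ω : Set ℂ) (hΩ : AnalyticJordanDomain Ω)
    (φ : ℂ → ℝ) (hφ : IsExhaustion φ Ω)
    (K : Set ℂ) (hK : IsCompact K) (hKΩ : K ⊆ Ω) (hharm : HarmonicOn φ (Ω \ K))
    (p : ℝ) (hp : 0 < p)
    (ν : Measure ℂ) (hν : IsRieszMeasure φ Ω ν)
    (μfam : ℝ → Measure ℂ) (hμ : ∀ r : ℝ, r < 0 → IsMAMeasure φ Ω ν r (μfam r)) :
    {f : ℂ → ℂ | MemPS p Ω μfam f} = {f : ℂ → ℂ | MemHClassical p Ω f} := by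
  obtain ⟨U, ψ, -, hU, hψ, hinj, himage, -⟩ := hΩ.analyticBoundary
  exact stmt0_general (hψ.mono (ball_subset_closedBall.trans hU))
    (hinj.mono (ball_subset_closedBall.trans hU)) himage hφ.isNegExhaustion hK hKΩ hharm hp.le hν hμ

end
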